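/- arXiv:1704.01029 — 2 statements merged into one kernel-verified Lean document; each statement's English description precedes it below -/
import Mathlib

section
/- Let M ≥ 3 be an integer and p ∈ [2, ∞) a real number. For every n ∈ ℕ and every M-linear form T : ℝⁿ × ℝⁿ × ⋯ × ℝⁿ → ℝ one has (∑_{i₂,…,i_M=1}^{n} (∑_{i₁=1}^{n} |T(e_{i₁},…,e_{i_M})|^{p/(p−1)})^{2(p−1)/p})^{1/2} ≤ (A_{p/(p−1)})^{M−1} · ‖T‖, where ‖T‖ := sup{|T(x^{(1)},…,x^{(M)})| : ‖x^{(1)}‖_{ℓ_p} ≤ 1 and ‖x^{(k)}‖_{ℓ_∞} ≤ 1 for k = 2,…,M}. -/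
open MeasureTheory Real Filter

/-- The `j`-th Rademacher function, `r_j(t) = sgn(sin(2^j π t))`. -/
noncomputable def rademacher (j : ℕ) (t : ℝ) : ℝ :=
  Real.sign (Real.sin ((2 : ℝ) ^ j * Real.pi * t))

/-- `p₀ ∈ (1,2)` is the unique solution of `Γ((p₀+1)/2) = √π / 2`. -/
noncomputable def khintchineP0 : ℝ :=
  sInf {p : ℝ | 1 < p ∧ p < 2 ∧ Real.Gamma ((p + 1) / 2) = Real.sqrt Real.pi / 2}

/-- The optimal constant `A_r` in the Khintchine inequality. -/
noncomputable def khintchineA (r : ℝ) : ℝ :=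
  if r ≤ khintchineP0 then (2 : ℝ) ^ (1 / r - 1 / 2)
  else if r < 2 then
    (1 / Real.sqrt 2) * (Real.Gamma ((r + 1) / 2) / Real.sqrt Real.pi) ^ (-(1 / r))
  else 1

/-- The `ℓ_p` norm of a vector in `ℝⁿ` (for finite `p`). -/
noncomputable def lpNorm (p : ℝ) {n : ℕ} (x : Fin n → ℝ) : ℝ :=
  (∑ i, |x i| ^ p) ^ (1 / p)

/-- The `ℓ_∞` norm of a vector in `ℝⁿ`. -/
noncomputable def linfNorm {n : ℕ} (x : Fin n → ℝ) : ℝ :=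
  ⨆ i, |x i|

/-- The norm of an `(m+1)`-linear form on `ℝᴺ × (ℝⁿ)^m` (encoded as a linear map into
`m`-multilinear maps): `sup{|T(x, y₁, …, y_m)| : ‖x‖_{ℓ_p} ≤ 1, ‖y_k‖_{ℓ_∞} ≤ 1}`. -/
noncomputable def multiOpNorm (p : ℝ) {N n m : ℕ}
    (T : (Fin N → ℝ) →ₗ[ℝ] MultilinearMap ℝ (fun _ : Fin m => (Fin n → ℝ)) ℝ) : ℝ :=
  sSup {c : ℝ | ∃ (x : Fin N → ℝ) (y : Fin m → (Fin n → ℝ)),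
    lpNorm p x ≤ 1 ∧ (∀ k, linfNorm (y k) ≤ 1) ∧ c = |T x y|}

theorem continuousAt_Gamma_of_pos {s : ℝ} (hs : 0 < s) : ContinuousAt Real.Gamma s :=
  (Real.differentiableAt_Gamma fun m => by
    have := m.cast_nonneg (α := ℝ)
    linarith).continuousAt

theorem Gamma_add_natCast_eq_prod {s : ℝ} (hs : 0 < s) (n : ℕ) :
    Real.Gamma (s + n) = (∏ j ∈ Finset.range n, (s + j)) * Real.Gamma s := by
  induction n with
  | zero => simp
  | succ n ih =>
    have h : s + ((n + 1 : ℕ) : ℝ) = (s + n) + 1 := by push_cast; ring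
    rw [h, Real.Gamma_add_one (by positivity), ih, Finset.prod_range_succ]
    ring

theorem Gamma_pow_le_of_convexCombination {s t x : ℝ} {k l : ℕ} (hs : 0 < s) (ht : 0 < t)
    (hk : 0 < k) (hl : 0 < l) (hx : (k + l) * x = k * s + l * t) :
    Real.Gamma x ^ (k + l) ≤ Real.Gamma s ^ k * Real.Gamma t ^ l := by
  have hk' : (0 : ℝ) < k := by exact_mod_cast hk
  have hl' : (0 : ℝ) < l := by exact_mod_cast hl
  have hkl : (0 : ℝ) < k + l := by positivity
  have hx' : x = (k / (k + l) : ℝ) * s + (l / (k + l) : ℝ) * t := by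
    field_simp; linarith
  have h := Real.Gamma_mul_add_mul_le_rpow_Gamma_mul_rpow_Gamma hs ht
    (a := k / (k + l)) (b := l / (k + l)) (by positivity) (by positivity) (by field_simp)
  rw [← hx'] at h
  have hxpos : 0 < x := by rw [hx']; positivity
  have hG := Real.Gamma_pos_of_pos hxpos
  have hGs := Real.Gamma_pos_of_pos hs
  have hGt := Real.Gamma_pos_of_pos ht
  calc Real.Gamma x ^ (k + l)
      ≤ (Real.Gamma s ^ (k / (k + l) : ℝ) * Real.Gamma t ^ (l / (k + l) : ℝ)) ^ (k + l) := by
        gcongr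
    _ = Real.Gamma s ^ k * Real.Gamma t ^ l := by
        rw [mul_pow, ← Real.rpow_natCast (Real.Gamma s ^ _), ← Real.rpow_mul hGs.le,
          ← Real.rpow_natCast (Real.Gamma t ^ _), ← Real.rpow_mul hGt.le]
        have e1 : (k / (k + l) : ℝ) * ((k + l : ℕ) : ℝ) = (k : ℕ) := by
          push_cast; field_simp
        have e2 : (l / (k + l) : ℝ) * ((k + l : ℕ) : ℝ) = (l : ℕ) := by
          push_cast; field_simp
        rw [e1, e2, Real.rpow_natCast, Real.rpow_natCast]

theorem Gamma_three_halves_eq : Real.Gamma (3 / 2) = √Real.pi / 2 := by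
  have : (3 / 2 : ℝ) = 1 / 2 + 1 := by norm_num
  rw [this, Real.Gamma_add_one (by norm_num), Real.Gamma_one_half_eq]
  ring

theorem lt_Gamma_three_halves : (0.8862 : ℝ) < Real.Gamma (3 / 2) := by
  rw [Gamma_three_halves_eq]
  have h : (1.7724 : ℝ) < √Real.pi := by
    apply Real.lt_sqrt_of_sq_lt
    have := Real.pi_gt_d4
    norm_num at this ⊢
    linarith
  linarith

theorem Gamma_three_halves_lt_Gamma_seven_fifths :
    Real.Gamma (3 / 2) < Real.Gamma (7 / 5) := by
  have hG := lt_Gamma_three_halves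
  have h := Gamma_pow_le_of_convexCombination (s := 7 / 5 + (25 : ℕ)) (t := 2 + (25 : ℕ))
    (x := 3 / 2 + (25 : ℕ)) (k := 5) (l := 1) (by positivity) (by positivity) (by norm_num)
    (by norm_num) (by norm_num)
  rw [Gamma_add_natCast_eq_prod (by norm_num), Gamma_add_natCast_eq_prod (by norm_num),
    Gamma_add_natCast_eq_prod (by norm_num), Real.Gamma_two] at h
  by_contra! hle
  have h75 : 0 < Real.Gamma (7 / 5) := Real.Gamma_pos_of_pos (by norm_num)
  have h32 : 0 < Real.Gamma (3 / 2) := by linarith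
  have h5 : Real.Gamma (7 / 5) ^ 5 ≤ Real.Gamma (3 / 2) ^ 5 := by gcongr
  set P := ∏ j ∈ Finset.range 25, ((3 / 2 : ℝ) + j) with hP
  set Q := ∏ j ∈ Finset.range 25, ((7 / 5 : ℝ) + j) with hQ
  set R := ∏ j ∈ Finset.range 25, ((2 : ℝ) + j) with hR
  have hQ0 : 0 < Q := Finset.prod_pos fun j _ => by positivity
  have hR0 : 0 < R := Finset.prod_pos fun j _ => by positivity
  have hnum : Q ^ 5 * R < 0.8862 * P ^ 6 := by
    rw [hP, hQ, hR]
    simp only [Finset.prod_range_succ, Finset.prod_range_zero]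
    norm_num
  have h1 : P ^ 6 * Real.Gamma (3 / 2) ^ 6 ≤ Q ^ 5 * R * Real.Gamma (3 / 2) ^ 5 := by
    calc P ^ 6 * Real.Gamma (3 / 2) ^ 6 = (P * Real.Gamma (3 / 2)) ^ (5 + 1) := by ring
      _ ≤ (Q * Real.Gamma (7 / 5)) ^ 5 * (R * 1) ^ 1 := h
      _ = Q ^ 5 * R * Real.Gamma (7 / 5) ^ 5 := by ring
      _ ≤ _ := by gcongr
  have h2 : P ^ 6 * Real.Gamma (3 / 2) ≤ Q ^ 5 * R := by
    have : 0 < Real.Gamma (3 / 2) ^ 5 := by positivity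
    nlinarith
  have hP6 : 0 ≤ P ^ 6 := by positivity
  nlinarith

theorem Gamma_lt_Gamma_three_halves : Real.Gamma (29 / 20) < Real.Gamma (3 / 2) := by
  have hG := lt_Gamma_three_halves
  have h := Gamma_pow_le_of_convexCombination (s := 3 / 2 + (25 : ℕ)) (t := 1 + (25 : ℕ))
    (x := 29 / 20 + (25 : ℕ)) (k := 9) (l := 1) (by positivity) (by positivity) (by norm_num)
    (by norm_num) (by norm_num)
  rw [Gamma_add_natCast_eq_prod (by norm_num), Gamma_add_natCast_eq_prod (by norm_num),
    Gamma_add_natCast_eq_prod (by norm_num), Real.Gamma_one] at h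
  by_contra! hle
  have h32 : 0 < Real.Gamma (3 / 2) := by linarith
  have h10 : Real.Gamma (3 / 2) ^ 10 ≤ Real.Gamma (29 / 20) ^ 10 := by gcongr
  set P := ∏ j ∈ Finset.range 25, ((3 / 2 : ℝ) + j) with hP
  set Q := ∏ j ∈ Finset.range 25, ((29 / 20 : ℝ) + j) with hQ
  set R := ∏ j ∈ Finset.range 25, ((1 : ℝ) + j) with hR
  have hP0 : 0 < P := Finset.prod_pos fun j _ => by positivity
  have hQ0 : 0 < Q := Finset.prod_pos fun j _ => by positivity
  have hnum : P ^ 9 * R < 0.8862 * Q ^ 10 := by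
    rw [hP, hQ, hR]
    simp only [Finset.prod_range_succ, Finset.prod_range_zero]
    norm_num
  have h1 : Q ^ 10 * Real.Gamma (3 / 2) ^ 10 ≤ P ^ 9 * R * Real.Gamma (3 / 2) ^ 9 := by
    calc Q ^ 10 * Real.Gamma (3 / 2) ^ 10 ≤ Q ^ 10 * Real.Gamma (29 / 20) ^ 10 := by gcongr
      _ = (Q * Real.Gamma (29 / 20)) ^ (9 + 1) := by ring
      _ ≤ (P * Real.Gamma (3 / 2)) ^ 9 * (R * 1) ^ 1 := h
      _ = _ := by ring
  have h2 : Q ^ 10 * Real.Gamma (3 / 2) ≤ P ^ 9 * R := by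
    have : 0 < Real.Gamma (3 / 2) ^ 9 := by positivity
    nlinarith
  have hP6 : 0 ≤ Q ^ 10 := by positivity
  nlinarith

theorem khintchineP0_spec :
    9 / 5 ≤ khintchineP0 ∧ khintchineP0 < 2 ∧
      Real.Gamma ((khintchineP0 + 1) / 2) = √Real.pi / 2 := by
  set S := {p : ℝ | 1 < p ∧ p < 2 ∧ Real.Gamma ((p + 1) / 2) = √Real.pi / 2} with hS
  have hcont : ContinuousOn (fun p : ℝ => Real.Gamma ((p + 1) / 2)) (Set.Icc (9 / 5) 2) := by
    intro p hp
    have : ContinuousAt Real.Gamma ((p + 1) / 2) :=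
      continuousAt_Gamma_of_pos (by linarith [hp.1])
    exact (ContinuousAt.comp (f := fun p : ℝ => (p + 1) / 2) this
      (by fun_prop)).continuousWithinAt
  obtain ⟨p, hp, hpe⟩ : ∃ p ∈ Set.Icc (9 / 5 : ℝ) (19 / 10),
      Real.Gamma ((p + 1) / 2) = √Real.pi / 2 := by
    refine intermediate_value_Icc' (by norm_num)
      (hcont.mono (Set.Icc_subset_Icc le_rfl (by norm_num))) ⟨?_, ?_⟩
    · rw [← Gamma_three_halves_eq]
      convert Gamma_lt_Gamma_three_halves.le using 2; norm_num
    · rw [← Gamma_three_halves_eq]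
      convert Gamma_three_halves_lt_Gamma_seven_fifths.le using 2; norm_num
  have hlow : ∀ r ∈ S, 9 / 5 ≤ r := by
    rintro r ⟨h1, h2, h3⟩
    by_contra! hr
    have h := (Real.convexOn_Gamma).le_max_of_mem_Icc (x := (r + 1) / 2) (y := 3 / 2)
      (z := 7 / 5) (Set.mem_Ioi.2 (by linarith)) (Set.mem_Ioi.2 (by norm_num))
      ⟨by linarith, by norm_num⟩
    rw [h3, Gamma_three_halves_eq, max_self, ← Gamma_three_halves_eq] at h
    exact absurd h (not_le.2 Gamma_three_halves_lt_Gamma_seven_fifths)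
  have hpS : p ∈ S := ⟨by linarith [hp.1], by linarith [hp.2], hpe⟩
  have hbdd : BddBelow S := ⟨9 / 5, hlow⟩
  have hge : 9 / 5 ≤ sInf S := le_csInf ⟨p, hpS⟩ hlow
  have hle : sInf S ≤ 19 / 10 := (csInf_le hbdd hpS).trans hp.2
  have hclos : sInf S ∈ closure S := csInf_mem_closure ⟨p, hpS⟩ hbdd
  obtain ⟨u, huS, hu⟩ := mem_closure_iff_seq_limit.1 hclos
  have hlim : Tendsto (fun n => Real.Gamma ((u n + 1) / 2)) atTop
      (nhds (Real.Gamma ((sInf S + 1) / 2))) := by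
    have hc : ContinuousAt Real.Gamma ((sInf S + 1) / 2) :=
      continuousAt_Gamma_of_pos (by linarith)
    exact hc.tendsto.comp ((hu.add_const 1).div_const 2)
  have hconst : (fun n => Real.Gamma ((u n + 1) / 2)) = fun _ => √Real.pi / 2 :=
    funext fun n => (huS n).2.2
  rw [hconst] at hlim
  have hval := tendsto_nhds_unique hlim tendsto_const_nhds
  exact ⟨hge, hle.trans_lt (by norm_num), hval⟩

theorem Gamma_le_of_khintchineP0_le {r : ℝ} (h1 : khintchineP0 ≤ r) (h2 : r ≤ 2) :
    Real.Gamma ((r + 1) / 2) ≤ √Real.pi / 2 := by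
  obtain ⟨ha, hb, hc⟩ := khintchineP0_spec
  have h := (Real.convexOn_Gamma).le_max_of_mem_Icc (x := (khintchineP0 + 1) / 2) (y := 3 / 2)
      (z := (r + 1) / 2) (Set.mem_Ioi.2 (by linarith)) (Set.mem_Ioi.2 (by norm_num))
      ⟨by linarith, by linarith⟩
  rwa [hc, Gamma_three_halves_eq, max_self] at h

/-- The average of `f (x + ∑ ± aᵢ)` over all choices of signs, the `aᵢ` being the entries of `l`. -/
noncomputable def signAvg : List ℝ → (ℝ → ℝ) → ℝ → ℝ
  | [], f, x => f x
  | a :: l, f, x => (signAvg l f (x + a) + signAvg l f (x - a)) / 2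

theorem signAvg_nil (f : ℝ → ℝ) (x : ℝ) : signAvg [] f x = f x := rfl

theorem signAvg_cons (a : ℝ) (l : List ℝ) (f : ℝ → ℝ) (x : ℝ) :
    signAvg (a :: l) f x = (signAvg l f (x + a) + signAvg l f (x - a)) / 2 := rfl

theorem signAvg_perm {l l' : List ℝ} (h : l.Perm l') (f : ℝ → ℝ) (x : ℝ) :
    signAvg l f x = signAvg l' f x := by
  induction h generalizing x with
  | nil => rfl
  | cons a _ ih => simp only [signAvg_cons, ih]
  | swap a b l =>
    simp only [signAvg_cons]
    rw [show x + b + a = x + a + b by ring, show x + b - a = x - a + b by ring,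
      show x - b + a = x + a - b by ring, show x - b - a = x - a - b by ring]
    ring
  | trans _ _ ih₁ ih₂ => rw [ih₁, ih₂]

theorem signAvg_add (l : List ℝ) (f g : ℝ → ℝ) (x : ℝ) :
    signAvg l (fun y => f y + g y) x = signAvg l f x + signAvg l g x := by
  induction l generalizing x with
  | nil => rfl
  | cons a l ih => simp only [signAvg_cons, ih]; ring

theorem signAvg_const_mul (l : List ℝ) (c : ℝ) (f : ℝ → ℝ) (x : ℝ) :
    signAvg l (fun y => c * f y) x = c * signAvg l f x := by
  induction l generalizing x with
  | nil => rfl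
  | cons a l ih => simp only [signAvg_cons, ih]; ring

theorem signAvg_const (l : List ℝ) (c : ℝ) (x : ℝ) : signAvg l (fun _ => c) x = c := by
  induction l generalizing x with
  | nil => rfl
  | cons a l ih => simp only [signAvg_cons, ih]; ring

theorem signAvg_mono (l : List ℝ) {f g : ℝ → ℝ} (h : ∀ y, f y ≤ g y) (x : ℝ) :
    signAvg l f x ≤ signAvg l g x := by
  induction l generalizing x with
  | nil => exact h x
  | cons a l ih => simp only [signAvg_cons]; linarith [ih (x + a), ih (x - a)]

theorem signAvg_sq (l : List ℝ) (x : ℝ) :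
    signAvg l (fun y => y ^ 2) x = x ^ 2 + (l.map (· ^ 2)).sum := by
  induction l generalizing x with
  | nil => simp [signAvg_nil]
  | cons a l ih => simp only [signAvg_cons, ih, List.map_cons, List.sum_cons]; ring

theorem signAvg_cos (l : List ℝ) (t x : ℝ) :
    signAvg l (fun y => Real.cos (y * t)) x =
      Real.cos (x * t) * (l.map fun a => Real.cos (a * t)).prod := by
  induction l generalizing x with
  | nil => simp [signAvg_nil]
  | cons a l ih =>
    simp only [signAvg_cons, ih, List.map_cons, List.prod_cons, add_mul, sub_mul,
      Real.cos_add, Real.cos_sub]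
    ring

theorem rpow_add_rpow_le_two_mul {x y q : ℝ} (hx : 0 ≤ x) (hy : 0 ≤ y) (hq0 : 0 ≤ q)
    (hq1 : q ≤ 1) : x ^ q + y ^ q ≤ 2 * ((x + y) / 2) ^ q := by
  have hc := (Real.concaveOn_rpow hq0 hq1).2
  have h := hc (Set.mem_Ici.2 hx) (Set.mem_Ici.2 hy) (a := 1 / 2) (b := 1 / 2) (by norm_num)
    (by norm_num) (by norm_num)
  simp only [smul_eq_mul] at h
  rw [show (x + y) / 2 = 1 / 2 * x + 1 / 2 * y by ring]
  linarith

theorem chord_le_rpow {y z w q : ℝ} (hy : 0 ≤ y) (hyw : y ≤ w) (hwz : w ≤ z) (hq0 : 0 ≤ q)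
    (hq1 : q ≤ 1) : (z - w) * y ^ q + (w - y) * z ^ q ≤ (z - y) * w ^ q := by
  rcases eq_or_lt_of_le (hyw.trans hwz) with h | h
  · obtain rfl : w = y := by linarith
    simp [h]
  have hc := (Real.concaveOn_rpow hq0 hq1).2
  have hzy : 0 < z - y := by linarith
  have := hc (Set.mem_Ici.2 hy) (Set.mem_Ici.2 (hy.trans h.le)) (a := (z - w) / (z - y))
    (b := (w - y) / (z - y)) (div_nonneg (by linarith) hzy.le) (div_nonneg (by linarith) hzy.le)
    (by field_simp; ring)
  simp only [smul_eq_mul] at this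
  have e : (z - w) / (z - y) * y + (w - y) / (z - y) * z = w := by field_simp; ring
  rw [e] at this
  calc (z - w) * y ^ q + (w - y) * z ^ q
      = (z - y) * ((z - w) / (z - y) * y ^ q + (w - y) / (z - y) * z ^ q) := by field_simp
    _ ≤ _ := by gcongr

/-- The bound used for a list with a dominant entry of square `u`, the other squares having
sum `x`. -/
noncomputable def dominantBound (q u x : ℝ) : ℝ := 2 * (2 * u) ^ q - (3 * u - x) ^ q

theorem rpow_add_le_dominantBound {q u x : ℝ} (hq0 : 0 ≤ q) (hq1 : q ≤ 1) (hu : 0 ≤ u)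
    (hx : 0 ≤ x) (hxu : x ≤ u) : (u + x) ^ q ≤ dominantBound q u x := by
  have h := rpow_add_rpow_le_two_mul (x := u + x) (y := 3 * u - x) (by linarith) (by linarith)
    hq0 hq1
  rw [show (u + x + (3 * u - x)) / 2 = 2 * u by ring] at h
  unfold dominantBound
  linarith

theorem two_mul_dominantBound_le {q u x d : ℝ} (hq0 : 0 ≤ q) (hq1 : q ≤ 1) (hd : 0 ≤ d)
    (hdx : d ≤ x) (h : x + d ≤ u) :
    2 * dominantBound q u x ≤ dominantBound q u (x + d) + dominantBound q u (x - d) := by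
  have h := rpow_add_rpow_le_two_mul (x := 3 * u - (x + d)) (y := 3 * u - (x - d)) (by linarith)
    (by linarith) hq0 hq1
  rw [show (3 * u - (x + d) + (3 * u - (x - d))) / 2 = 3 * u - x by ring] at h
  unfold dominantBound
  linarith

theorem two_mul_dominantBound_le' {q u x d : ℝ} (hq0 : 0 ≤ q) (hq1 : q ≤ 1) (hu : 0 ≤ u)
    (hxu : x ≤ u) (h : u < x + d) :
    2 * dominantBound q u x ≤ (u + (x + d)) ^ q + dominantBound q u (x - d) := by
  have h₁ := chord_le_rpow (y := 2 * u) (z := 3 * u - (x - d)) (w := u + (x + d)) (q := q)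
    (by linarith) (by linarith) (by linarith) hq0 hq1
  have h₂ := chord_le_rpow (y := 2 * u) (z := 3 * u - (x - d)) (w := 3 * u - x) (q := q)
    (by linarith) (by linarith) (by linarith) hq0 hq1
  have hD : 0 < u - x + d := by linarith
  unfold dominantBound
  have : (u - x + d) * (2 * (2 * u) ^ q + (3 * u - (x - d)) ^ q) ≤
      (u - x + d) * ((u + (x + d)) ^ q + 2 * (3 * u - x) ^ q) := by linarith
  linarith [le_of_mul_le_mul_left this hD]

theorem self_add_mul_log_le_rpow {y q : ℝ} (hy : 0 ≤ y) (hq : 0 < q) :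
    y + (q - 1) * (y * Real.log y) ≤ y ^ q := by
  rcases hy.eq_or_lt with rfl | hy
  · simp [Real.zero_rpow hq.ne']
  have h := Real.add_one_le_exp ((q - 1) * Real.log y)
  have e : y ^ q = y * Real.exp ((q - 1) * Real.log y) := by
    rw [mul_comm (q - 1), ← Real.rpow_def_of_pos hy, Real.rpow_sub_one hy.ne']
    field_simp
  rw [e]
  nlinarith

theorem log_le_two_mul_sub_one_div {y : ℝ} (hy : 0 < y) (hy1 : y ≤ 1) :
    Real.log y ≤ 2 * (y - 1) / (y + 1) := by
  rcases hy1.eq_or_lt with rfl | hy1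
  · simp
  have h := Real.lt_log_one_add_of_pos (x := y⁻¹ - 1)
    (by have := (one_lt_inv₀ hy).2 hy1
        linarith)
  rw [add_sub_cancel, Real.log_inv] at h
  have e : 2 * (y⁻¹ - 1) / (y⁻¹ - 1 + 2) = - (2 * (y - 1) / (y + 1)) := by
    have : y⁻¹ - 1 + 2 = (1 + y) / y := by field_simp; ring
    rw [this]
    field_simp
    ring
  linarith

theorem log_le_half_sub_inv {d : ℝ} (hd : 1 ≤ d) : Real.log d ≤ (d - d⁻¹) / 2 := by
  rw [← Real.sinh_log (by linarith)]
  exact Real.self_le_sinh_iff.2 (Real.log_nonneg hd)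

theorem two_le_rpow_add_rpow_add_rpow {t q : ℝ} (ht : t ^ 2 ≤ 1) (hq0 : 0 < q) (hq1 : q ≤ 1) :
    2 ≤ (((1 + t) / 2) ^ 2) ^ q + (((1 - t) / 2) ^ 2) ^ q + ((3 - t ^ 2) / 2) ^ q := by
  have hlog : ∀ s : ℝ, s ^ 2 ≤ 1 → ((1 + s) / 2) ^ 2 * Real.log (((1 + s) / 2) ^ 2) ≤
      - ((1 - s ^ 2) * ((1 + s) / (3 + s))) := by
    intro s hs
    have hs' := abs_le.1 ((sq_le_one_iff_abs_le_one s).1 hs)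
    rcases hs'.1.eq_or_lt with h | h
    · simp [← h]
    have h1 := log_le_two_mul_sub_one_div (y := (1 + s) / 2) (by linarith) (by linarith)
    rw [Real.log_pow]
    have e : 2 * ((1 + s) / 2 - 1) / ((1 + s) / 2 + 1) = 2 * (s - 1) / (3 + s) := by
      have : (1 + s) / 2 + 1 = (3 + s) / 2 := by ring
      have h3 : 3 + s ≠ 0 := by linarith
      rw [this]; field_simp; ring
    rw [e] at h1
    have h3 : 0 < 3 + s := by linarith
    calc ((1 + s) / 2) ^ 2 * (((2 : ℕ) : ℝ) * Real.log ((1 + s) / 2))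
        ≤ ((1 + s) / 2) ^ 2 * (((2 : ℕ) : ℝ) * (2 * (s - 1) / (3 + s))) := by gcongr
      _ = _ := by push_cast; field_simp; ring
  have h1 := hlog t ht
  have h2 := hlog (-t) (by rwa [neg_sq])
  rw [neg_sq, ← sub_eq_add_neg, ← sub_eq_add_neg] at h2
  have h3 := log_le_half_sub_inv (d := (3 - t ^ 2) / 2) (by linarith)
  have hd : 0 < (3 - t ^ 2) / 2 := by linarith
  have h4 : (3 - t ^ 2) / 2 * Real.log ((3 - t ^ 2) / 2) ≤ (1 - t ^ 2) * (5 - t ^ 2) / 8 := by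
    calc _ ≤ (3 - t ^ 2) / 2 * (((3 - t ^ 2) / 2 - ((3 - t ^ 2) / 2)⁻¹) / 2) := by gcongr
      _ = (((3 - t ^ 2) / 2) ^ 2 - 1) / 2 := by
        set d := (3 - t ^ 2) / 2
        field_simp
      _ = _ := by ring
  have hab := abs_le.1 ((sq_le_one_iff_abs_le_one t).1 ht)
  have h5 : (1 - t ^ 2) * (5 - t ^ 2) / 8 ≤
      (1 - t ^ 2) * ((1 + t) / (3 + t)) + (1 - t ^ 2) * ((1 - t) / (3 - t)) := by
    have e : (1 + t) / (3 + t) + (1 - t) / (3 - t) = (6 - 2 * t ^ 2) / (9 - t ^ 2) := by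
      have ha : 3 + t ≠ 0 := by linarith
      have hb : 3 - t ≠ 0 := by linarith
      have hc : 9 - t ^ 2 ≠ 0 := by linarith
      field_simp; ring
    rw [← mul_add, e, mul_div_assoc]
    have : (5 - t ^ 2) / 8 ≤ (6 - 2 * t ^ 2) / (9 - t ^ 2) := by
      rw [div_le_div_iff₀ (by norm_num) (by linarith)]
      nlinarith [mul_nonneg (sub_nonneg.2 ht) (by positivity : 0 ≤ t ^ 2 + 3)]
    have h0 : 0 ≤ 1 - t ^ 2 := by linarith
    gcongr
  have g1 := self_add_mul_log_le_rpow (y := ((1 + t) / 2) ^ 2) (by positivity) hq0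
  have g2 := self_add_mul_log_le_rpow (y := ((1 - t) / 2) ^ 2) (by positivity) hq0
  have g3 := self_add_mul_log_le_rpow (y := (3 - t ^ 2) / 2) hd.le hq0
  have hs : ((1 + t) / 2) ^ 2 * Real.log (((1 + t) / 2) ^ 2) +
      ((1 - t) / 2) ^ 2 * Real.log (((1 - t) / 2) ^ 2) +
      (3 - t ^ 2) / 2 * Real.log ((3 - t ^ 2) / 2) ≤ 0 := by linarith
  nlinarith [mul_nonneg (sub_nonneg.2 hq1) (neg_nonneg.2 hs)]

theorem abs_rpow_eq_sq_rpow (x : ℝ) (q : ℝ) : |x| ^ (2 * q) = (x ^ 2) ^ q := by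
  rw [Real.rpow_mul (abs_nonneg x), Real.rpow_two, sq_abs]

theorem two_rpow_mul_dominantBound_le {a b q : ℝ} (hb : b ^ 2 ≤ a ^ 2) (hq0 : 0 < q)
    (hq1 : q ≤ 1) : 2 ^ (q - 1) * dominantBound q (a ^ 2) (b ^ 2) ≤
      (|a + b| ^ (2 * q) + |a - b| ^ (2 * q)) / 2 := by
  rcases eq_or_ne a 0 with rfl | ha
  · have hb0 : b = 0 := by
      have : b ^ 2 = 0 := le_antisymm (by simpa using hb) (sq_nonneg b)
      simpa using this
    simp [hb0, dominantBound, Real.zero_rpow hq0.ne', Real.rpow_nonneg]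
  have ha2 : 0 < a ^ 2 := by positivity
  have ht : (b / a) ^ 2 ≤ 1 := by rw [div_pow]; exact div_le_one_of_le₀ hb ha2.le
  have h := two_le_rpow_add_rpow_add_rpow ht hq0 hq1
  rw [abs_rpow_eq_sq_rpow, abs_rpow_eq_sq_rpow]
  have e1 : (a + b) ^ 2 = 4 * a ^ 2 * ((1 + b / a) / 2) ^ 2 := by field_simp; ring
  have e2 : (a - b) ^ 2 = 4 * a ^ 2 * ((1 - b / a) / 2) ^ 2 := by field_simp; ring
  have e3 : 3 * a ^ 2 - b ^ 2 = 2 * a ^ 2 * ((3 - (b / a) ^ 2) / 2) := by field_simp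
  have e4 : (4 * a ^ 2) ^ q = 2 ^ q * (2 * a ^ 2) ^ q := by
    rw [← Real.mul_rpow (by norm_num) (by positivity)]; congr 1; ring
  unfold dominantBound
  have h4 : 0 ≤ 4 * a ^ 2 := by positivity
  have h2 : 0 ≤ 2 * a ^ 2 := by positivity
  rw [e1, e2, e3, Real.mul_rpow h4 (sq_nonneg _), Real.mul_rpow h4 (sq_nonneg _),
    Real.mul_rpow h2 (by linarith), e4, Real.rpow_sub_one (by norm_num)]
  set X := (2 : ℝ) ^ q * (2 * a ^ 2) ^ q with hX
  have hX0 : 0 < X := by positivity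
  have e5 : ∀ D : ℝ, (2 : ℝ) ^ q / 2 * (2 * (2 * a ^ 2) ^ q - (2 * a ^ 2) ^ q * D) =
      X * (2 - D) / 2 := by intro D; rw [hX]; ring
  rw [e5]
  nlinarith

/-- The sum of the squares of the entries of a list. -/
def sqSum (l : List ℝ) : ℝ := (l.map (· ^ 2)).sum

theorem sqSum_cons (a : ℝ) (l : List ℝ) : sqSum (a :: l) = a ^ 2 + sqSum l := by
  simp [sqSum]

theorem sqSum_nonneg (l : List ℝ) : 0 ≤ sqSum l := by
  induction l with
  | nil => simp [sqSum]
  | cons a l ih => rw [sqSum_cons]; positivity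

theorem sqSum_perm {l l' : List ℝ} (h : l.Perm l') : sqSum l = sqSum l' :=
  (h.map _).sum_eq

theorem dominant_khintchine {q C : ℝ} (hq0 : 0 < q) (hq1 : q ≤ 1) (hC0 : 0 ≤ C)
    (hC1 : C ≤ 2 ^ (q - 1))
    (hflat : ∀ l : List ℝ, (∀ b ∈ l, 2 * b ^ 2 ≤ sqSum l) →
      C * sqSum l ^ q ≤ signAvg l (fun y => |y| ^ (2 * q)) 0) (n : ℕ) :
    ∀ (a : ℝ) (l : List ℝ), l.length = n →
      (sqSum l ≤ a ^ 2 → C * dominantBound q (a ^ 2) (sqSum l) ≤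
        signAvg (a :: l) (fun y => |y| ^ (2 * q)) 0) ∧
      C * (a ^ 2 + sqSum l) ^ q ≤ signAvg (a :: l) (fun y => |y| ^ (2 * q)) 0 := by
  set f : ℝ → ℝ := fun y => |y| ^ (2 * q) with hf
  have two_entries : ∀ a b : ℝ, b ^ 2 ≤ a ^ 2 →
      C * dominantBound q (a ^ 2) (b ^ 2) ≤ (f (a + b) + f (a - b)) / 2 := by
    intro a b hb
    refine le_trans ?_ (two_rpow_mul_dominantBound_le hb hq0 hq1)
    refine mul_le_mul_of_nonneg_right hC1 ?_
    exact le_trans (by positivity)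
      (rpow_add_le_dominantBound hq0.le hq1 (sq_nonneg a) (sq_nonneg b) hb)
  have hfneg : ∀ y, f (-y) = f y := fun y => by simp [hf]
  induction n with
  | zero =>
    intro a l hl
    obtain rfl := List.length_eq_zero_iff.1 hl
    have h0 : C * dominantBound q (a ^ 2) 0 ≤ signAvg [a] f 0 := by
      have := two_entries a 0 (by simpa using sq_nonneg a)
      simpa [signAvg_cons, signAvg_nil, hfneg] using this
    refine ⟨fun _ => by simpa [sqSum] using h0, le_trans ?_ h0⟩
    refine mul_le_mul_of_nonneg_left ?_ hC0
    simpa [sqSum] using rpow_add_le_dominantBound hq0.le hq1 (sq_nonneg a) le_rfl (sq_nonneg a)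
  | succ n ih =>
    have hdom : ∀ (a : ℝ) (l : List ℝ), l.length = n + 1 → sqSum l ≤ a ^ 2 →
        C * dominantBound q (a ^ 2) (sqSum l) ≤ signAvg (a :: l) f 0 := by
      intro a l hl hla
      match l, hl with
      | [b], _ =>
        have hb : sqSum [b] = b ^ 2 := by simp [sqSum]
        rw [hb] at hla ⊢
        refine (two_entries a b hla).trans_eq ?_
        simp only [signAvg_cons, signAvg_nil]
        rw [show (0 : ℝ) - a + b = -(a - b) by ring, show (0 : ℝ) - a - b = -(a + b) by ring,
          hfneg, hfneg, zero_add]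
        ring
      | b :: c :: l, hl =>
        have key : ∀ b c : ℝ, 0 ≤ b * c → sqSum (b :: c :: l) ≤ a ^ 2 →
            C * (2 * dominantBound q (a ^ 2) (sqSum (b :: c :: l))) ≤
              signAvg (a :: (b + c) :: l) f 0 + signAvg (a :: (b - c) :: l) f 0 := by
          intro b c hbc hla
          have hlen : ∀ x : ℝ, (x :: l).length = n := fun x => by simpa using hl
          have hS := sqSum_nonneg l
          have hp : sqSum ((b + c) :: l) = sqSum (b :: c :: l) + 2 * (b * c) := by
            simp only [sqSum_cons]; ring
          have hm : sqSum ((b - c) :: l) = sqSum (b :: c :: l) - 2 * (b * c) := by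
            simp only [sqSum_cons]; ring
          have hd : 2 * (b * c) ≤ sqSum (b :: c :: l) := by
            simp only [sqSum_cons]; nlinarith [sq_nonneg (b - c)]
          have h₂ := (ih a ((b - c) :: l) (hlen _)).1 (by rw [hm]; linarith)
          rw [hm] at h₂
          by_cases hcase : sqSum (b :: c :: l) + 2 * (b * c) ≤ a ^ 2
          · have h₁ := (ih a ((b + c) :: l) (hlen _)).1 (by rw [hp]; exact hcase)
            rw [hp] at h₁
            refine le_trans ?_ (add_le_add h₁ h₂)
            rw [← mul_add]
            exact mul_le_mul_of_nonneg_left (two_mul_dominantBound_le hq0.le hq1 (by linarith)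
              hd hcase) hC0
          · have h₁ := (ih a ((b + c) :: l) (hlen _)).2
            rw [hp] at h₁
            refine le_trans ?_ (add_le_add h₁ h₂)
            rw [← mul_add]
            exact mul_le_mul_of_nonneg_left (two_mul_dominantBound_le' hq0.le hq1 (sq_nonneg a)
              hla (not_le.1 hcase)) hC0
        have split : ∀ c : ℝ, signAvg (a :: b :: c :: l) f 0 =
            (signAvg (a :: (b + c) :: l) f 0 + signAvg (a :: (b - c) :: l) f 0) / 2 := by
          intro c
          rw [signAvg_cons a, signAvg_cons a, signAvg_cons a]
          simp only [signAvg_cons]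
          ring_nf
        rw [split]
        rcases le_total 0 (b * c) with h | h
        · linarith [key b c h hla]
        · have hneg : sqSum (b :: -c :: l) = sqSum (b :: c :: l) := by simp [sqSum_cons]
          have := key b (-c) (by linarith) (by rw [hneg]; exact hla)
          rw [hneg, sub_neg_eq_add, ← sub_eq_add_neg] at this
          linarith
    intro a l hl
    refine ⟨hdom a l hl, ?_⟩
    by_cases hfl : ∀ b ∈ a :: l, 2 * b ^ 2 ≤ sqSum (a :: l)
    · simpa only [sqSum_cons] using hflat _ hfl
    · push Not at hfl
      obtain ⟨b, hb, hbl⟩ := hfl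
      have hperm := List.perm_cons_erase hb
      rw [signAvg_perm hperm, ← sqSum_cons, sqSum_perm hperm, sqSum_cons]
      rw [sqSum_perm hperm, sqSum_cons] at hbl
      have hle : sqSum ((a :: l).erase b) ≤ b ^ 2 := by linarith
      refine le_trans ?_ (hdom b _ ?_ hle)
      · exact mul_le_mul_of_nonneg_left (rpow_add_le_dominantBound hq0.le hq1 (sq_nonneg b)
          (sqSum_nonneg _) hle) hC0
      · rw [List.length_erase_of_mem hb]; simpa using hl

theorem integrableOn_mul_rpow {p C : ℝ} {f : ℝ → ℝ} (hp0 : 0 < p) (hp2 : p < 2)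
    (hf : Measurable f) (h1 : ∀ t, 0 < t → |f t| ≤ C) (h2 : ∀ t, 0 < t → |f t| ≤ C * t ^ 2) :
    IntegrableOn (fun t => f t * t ^ (-p - 1)) (Set.Ioi 0) := by
  have hm : Measurable fun t : ℝ => f t * t ^ (-p - 1) := hf.mul (by fun_prop)
  rw [← Set.Ioc_union_Ioi_eq_Ioi zero_le_one]
  refine IntegrableOn.union ?_ ?_
  · have hi : IntegrableOn (fun t : ℝ => C * t ^ (1 - p)) (Set.Ioc 0 1) := by
      refine Integrable.const_mul ?_ C
      exact (intervalIntegrable_iff_integrableOn_Ioc_of_le zero_le_one).1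
        (intervalIntegral.intervalIntegrable_rpow' (by linarith))
    refine Integrable.mono' hi hm.aestronglyMeasurable ?_
    filter_upwards [ae_restrict_mem measurableSet_Ioc] with t ht
    rw [norm_mul, Real.norm_eq_abs, Real.norm_of_nonneg (Real.rpow_nonneg ht.1.le _)]
    calc |f t| * t ^ (-p - 1) ≤ C * t ^ 2 * t ^ (-p - 1) := by
          have := Real.rpow_nonneg ht.1.le (-p - 1)
          gcongr
          exact h2 t ht.1
      _ = C * t ^ (1 - p) := by
          rw [mul_assoc, ← Real.rpow_two, ← Real.rpow_add ht.1]; congr 2; ring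
  · have hi : IntegrableOn (fun t : ℝ => C * t ^ (-p - 1)) (Set.Ioi 1) :=
      Integrable.const_mul (integrableOn_Ioi_rpow_of_lt (by linarith) one_pos) C
    refine Integrable.mono' hi hm.aestronglyMeasurable ?_
    filter_upwards [ae_restrict_mem measurableSet_Ioi] with t ht
    have ht0 : (0 : ℝ) < t := one_pos.trans ht
    rw [norm_mul, Real.norm_eq_abs, Real.norm_of_nonneg (Real.rpow_nonneg ht0.le _)]
    have := Real.rpow_nonneg ht0.le (-p - 1)
    gcongr
    exact h1 t ht0

theorem integral_comp_mul_mul_rpow (F : ℝ → ℝ) {a : ℝ} (ha : 0 < a) (p : ℝ) :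
    ∫ t in Set.Ioi 0, F (a * t) * t ^ (-p - 1) = a ^ p * ∫ t in Set.Ioi 0, F t * t ^ (-p - 1) := by
  have h := MeasureTheory.integral_comp_mul_left_Ioi (fun u => F u * u ^ (-p - 1)) 0 ha
  rw [mul_zero, smul_eq_mul] at h
  have e : ∫ t in Set.Ioi 0, F (a * t) * (a * t) ^ (-p - 1) =
      a ^ (-p - 1) * ∫ t in Set.Ioi 0, F (a * t) * t ^ (-p - 1) := by
    rw [← integral_const_mul]
    refine setIntegral_congr_fun measurableSet_Ioi fun t ht => ?_
    rw [Real.mul_rpow ha.le (le_of_lt ht)]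
    ring
  rw [e] at h
  have e2 : a ^ p * a ^ (-p - 1) = a⁻¹ := by
    rw [← Real.rpow_add ha, ← Real.rpow_neg_one]; congr 1; ring
  have hne : a⁻¹ ≠ 0 := (inv_pos.2 ha).ne'
  refine mul_left_cancel₀ hne ?_
  rw [mul_left_comm, ← h, ← mul_assoc, e2]

/-- The normalising constant in the integral representation of `|a| ^ p`. -/
noncomputable def cosIntegral (p : ℝ) : ℝ := ∫ t in Set.Ioi (0 : ℝ), (1 - Real.cos t) * t ^ (-p - 1)

theorem integrableOn_one_sub_cos_mul {p : ℝ} (hp0 : 0 < p) (hp2 : p < 2) (a : ℝ) :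
    IntegrableOn (fun t => (1 - Real.cos (a * t)) * t ^ (-p - 1)) (Set.Ioi 0) := by
  refine integrableOn_mul_rpow (C := 2 + a ^ 2) hp0 hp2 (by fun_prop) (fun t _ => ?_)
    fun t _ => ?_
  · rw [abs_of_nonneg (by linarith [Real.cos_le_one (a * t)])]
    nlinarith [Real.neg_one_le_cos (a * t)]
  · rw [abs_of_nonneg (by linarith [Real.cos_le_one (a * t)])]
    nlinarith [Real.one_sub_sq_div_two_le_cos (x := a * t), sq_nonneg t, sq_nonneg (a * t)]

theorem integral_one_sub_cos_mul {p : ℝ} (hp0 : 0 < p) (a : ℝ) :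
    ∫ t in Set.Ioi 0, (1 - Real.cos (a * t)) * t ^ (-p - 1) = |a| ^ p * cosIntegral p := by
  rcases eq_or_ne a 0 with rfl | ha
  · simp [Real.zero_rpow hp0.ne']
  rw [cosIntegral, ← integral_comp_mul_mul_rpow (fun u => 1 - Real.cos u) (abs_pos.2 ha) p]
  refine setIntegral_congr_fun measurableSet_Ioi fun t ht => ?_
  have : Real.cos (|a| * t) = Real.cos (a * t) := by
    rw [← Real.cos_abs (a * t), abs_mul, abs_of_pos (show 0 < t from ht)]
  simp only [this]

theorem cosIntegral_pos {p : ℝ} (hp0 : 0 < p) (hp2 : p < 2) : 0 < cosIntegral p := by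
  have hi := integrableOn_one_sub_cos_mul hp0 hp2 1
  simp only [one_mul] at hi
  have hnn : ∀ t ∈ Set.Ioi (0 : ℝ), 0 ≤ (1 - Real.cos t) * t ^ (-p - 1) := fun t ht =>
    mul_nonneg (by linarith [Real.cos_le_one t]) (Real.rpow_nonneg (le_of_lt ht) _)
  have h := (setIntegral_pos_iff_support_of_nonneg_ae
    ((ae_restrict_mem measurableSet_Ioi).mono hnn) hi).2 ?_
  · exact h
  refine lt_of_lt_of_le ?_ (measure_mono (s := Set.Ioo 0 1) ?_)
  · simp
  · rintro t ⟨h0, h1⟩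
    refine ⟨?_, h0⟩
    rw [Function.mem_support]
    have hc : Real.cos t < 1 := by
      rw [← Real.cos_zero]
      exact Real.cos_lt_cos_of_nonneg_of_le_pi le_rfl (by linarith [Real.pi_gt_three]) h0
    exact (mul_pos (by linarith) (Real.rpow_pos_of_pos h0 _)).ne'

theorem integrable_signAvg {μ : Measure ℝ} {G : ℝ → ℝ → ℝ} (hG : ∀ y, Integrable (G y) μ)
    (l : List ℝ) (x : ℝ) : Integrable (fun t => signAvg l (fun y => G y t) x) μ := by
  induction l generalizing x with
  | nil => exact hG x
  | cons a l ih => simp only [signAvg_cons]; exact ((ih _).add (ih _)).div_const 2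

theorem signAvg_integral {μ : Measure ℝ} {G : ℝ → ℝ → ℝ} (hG : ∀ y, Integrable (G y) μ)
    (l : List ℝ) (x : ℝ) :
    signAvg l (fun y => ∫ t, G y t ∂μ) x = ∫ t, signAvg l (fun y => G y t) x ∂μ := by
  induction l generalizing x with
  | nil => rfl
  | cons a l ih =>
    simp only [signAvg_cons]
    rw [integral_div, integral_add (integrable_signAvg hG l _) (integrable_signAvg hG l _),
      ih, ih]

theorem signAvg_one_sub_cos (l : List ℝ) (t c : ℝ) :
    signAvg l (fun y => (1 - Real.cos (y * t)) * c) 0 =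
      (1 - (l.map fun a => Real.cos (a * t)).prod) * c := by
  have : (fun y => (1 - Real.cos (y * t)) * c) = fun y => c + (-c) * Real.cos (y * t) := by
    ext y; ring
  rw [this, signAvg_add l (fun _ => c), signAvg_const, signAvg_const_mul, signAvg_cos]
  simp; ring

theorem cosIntegral_mul_signAvg {p : ℝ} (hp0 : 0 < p) (hp2 : p < 2) (l : List ℝ) :
    cosIntegral p * signAvg l (fun y => |y| ^ p) 0 =
      ∫ t in Set.Ioi 0, (1 - (l.map fun a => Real.cos (a * t)).prod) * t ^ (-p - 1) := by
  rw [← signAvg_const_mul]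
  simp_rw [mul_comm (cosIntegral p), ← integral_one_sub_cos_mul hp0]
  rw [signAvg_integral (integrableOn_one_sub_cos_mul hp0 hp2)]
  simp_rw [signAvg_one_sub_cos]

theorem integrableOn_one_sub_prod_cos {p : ℝ} (hp0 : 0 < p) (hp2 : p < 2) (l : List ℝ) :
    IntegrableOn (fun t => (1 - (l.map fun a => Real.cos (a * t)).prod) * t ^ (-p - 1))
      (Set.Ioi 0) := by
  have := integrable_signAvg (integrableOn_one_sub_cos_mul hp0 hp2) l 0
  simp only [signAvg_one_sub_cos] at this
  exact this

theorem integral_cos_gaussianReal (t : ℝ) :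
    ∫ x, Real.cos (x * t) ∂(ProbabilityTheory.gaussianReal 0 1) = Real.exp (-(t ^ 2 / 2)) := by
  have h := ProbabilityTheory.charFun_gaussianReal (μ := 0) (v := 1) t
  rw [charFun_apply_real] at h
  have h2 := congrArg Complex.re h
  rw [← RCLike.re_to_complex, ← integral_re] at h2
  · have e1 : ∀ x : ℝ, RCLike.re (Complex.exp (t * x * Complex.I)) = Real.cos (x * t) := by
      intro x
      rw [← Complex.ofReal_mul, RCLike.re_to_complex, Complex.exp_ofReal_mul_I_re, mul_comm]
    simp_rw [e1] at h2
    rw [h2]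
    have : (t : ℂ) * (0 : ℝ) * Complex.I - ((1 : NNReal) : ℝ) * (t : ℂ) ^ 2 / 2 =
        ((-(t ^ 2 / 2) : ℝ) : ℂ) := by push_cast; simp
    rw [this, Complex.exp_ofReal_re]
  · refine Integrable.mono' (g := fun _ => (1 : ℝ)) (integrable_const _)
      (by fun_prop) (ae_of_all _ fun x => ?_)
    rw [← Complex.ofReal_mul, Complex.norm_exp_ofReal_mul_I]

theorem integral_abs_rpow_gaussianReal {p : ℝ} (hp : 0 < p) :
    ∫ x, |x| ^ p ∂(ProbabilityTheory.gaussianReal 0 1) =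
      2 ^ (p / 2) * Real.Gamma ((p + 1) / 2) / √Real.pi := by
  rw [ProbabilityTheory.integral_gaussianReal_eq_integral_smul one_ne_zero]
  simp only [ProbabilityTheory.gaussianPDFReal, smul_eq_mul, sub_zero, NNReal.coe_one, mul_one]
  have e : ∀ x : ℝ, (√(2 * Real.pi))⁻¹ * Real.exp (-x ^ 2 / 2) * |x| ^ p =
      (fun y : ℝ => (√(2 * Real.pi))⁻¹ * (y ^ p * Real.exp (-(1 / 2) * y ^ (2 : ℝ)))) |x| := by
    intro x
    simp only [Real.rpow_two, sq_abs]
    rw [show -x ^ 2 / 2 = -(1 / 2) * x ^ 2 by ring]; ring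
  have habs := integral_comp_abs
    (f := fun y : ℝ => (√(2 * Real.pi))⁻¹ * (y ^ p * Real.exp (-(1 / 2) * y ^ (2 : ℝ))))
  refine ((integral_congr_ae (ae_of_all _ e)).trans habs).trans ?_
  rw [integral_const_mul,
      integral_rpow_mul_exp_neg_mul_rpow (by norm_num) (by linarith) (by norm_num)]
  rw [Real.sqrt_mul (by norm_num), one_div, Real.inv_rpow (by norm_num),
      ← Real.rpow_neg (by norm_num)]
  have h2 : (2 : ℝ) ^ (-(-(p + 1) / 2)) = 2 ^ (p / 2) * √2 := by
    rw [Real.sqrt_eq_rpow, ← Real.rpow_add (by norm_num)]; congr 1; ring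
  rw [h2]
  have : √2 ≠ 0 := by positivity
  have : √Real.pi ≠ 0 := by positivity
  field_simp

theorem integrable_abs_rpow_gaussianReal {p : ℝ} (hp : 0 < p) :
    Integrable (fun x => |x| ^ p) (ProbabilityTheory.gaussianReal 0 1) := by
  by_contra h
  have h1 := integral_abs_rpow_gaussianReal hp
  rw [integral_undef h] at h1
  have : 0 < 2 ^ (p / 2) * Real.Gamma ((p + 1) / 2) / √Real.pi := by
    have := Real.Gamma_pos_of_pos (s := (p + 1) / 2) (by linarith)
    have := Real.sqrt_pos.2 Real.pi_pos
    positivity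
  linarith

theorem integral_one_sub_exp {p : ℝ} (hp0 : 0 < p) (hp2 : p < 2) :
    ∫ t in Set.Ioi (0 : ℝ), (1 - Real.exp (-(t ^ 2 / 2))) * t ^ (-p - 1) =
      cosIntegral p * (2 ^ (p / 2) * Real.Gamma ((p + 1) / 2) / √Real.pi) := by
  set γ := ProbabilityTheory.gaussianReal 0 1
  have hint : Integrable (Function.uncurry fun x t : ℝ => (1 - Real.cos (x * t)) * t ^ (-p - 1))
      (γ.prod (volume.restrict (Set.Ioi 0))) := by
    rw [integrable_prod_iff (by
      refine Measurable.aestronglyMeasurable ?_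
      unfold Function.uncurry
      fun_prop)]
    refine ⟨ae_of_all _ fun x => integrableOn_one_sub_cos_mul hp0 hp2 x, ?_⟩
    have e : ∀ x : ℝ, ∫ t in Set.Ioi 0, ‖(1 - Real.cos (x * t)) * t ^ (-p - 1)‖ =
        |x| ^ p * cosIntegral p := by
      intro x
      rw [← integral_one_sub_cos_mul hp0]
      refine setIntegral_congr_fun measurableSet_Ioi fun t ht => ?_
      exact Real.norm_of_nonneg (mul_nonneg (by linarith [Real.cos_le_one (x * t)])
        (Real.rpow_nonneg (le_of_lt ht) _))
    simp only [Function.uncurry_apply_pair, e]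
    exact (integrable_abs_rpow_gaussianReal hp0).mul_const _
  have h := integral_integral_swap hint
  simp_rw [integral_one_sub_cos_mul hp0] at h
  rw [integral_mul_const, integral_abs_rpow_gaussianReal hp0] at h
  rw [mul_comm, h]
  refine integral_congr_ae (ae_of_all _ fun t => ?_)
  simp only
  rw [integral_mul_const, integral_sub (integrable_const _), integral_cos_gaussianReal]
  · simp
  · refine Integrable.mono' (g := fun _ => (1 : ℝ)) (integrable_const _)
      (by fun_prop) (ae_of_all _ fun x => ?_)
    exact Real.abs_cos_le_one _

/-- The integral of `(1 - |cos t| ^ s) * t ^ (-p - 1)` over the positive half-line. -/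
noncomputable def absCosIntegral (p s : ℝ) : ℝ :=
  ∫ t in Set.Ioi (0 : ℝ), (1 - |Real.cos t| ^ s) * t ^ (-p - 1)

/-- The integral of `(1 - exp (-s * t ^ 2 / 2)) * t ^ (-p - 1)` over the positive half-line. -/
noncomputable def gaussIntegral (p s : ℝ) : ℝ :=
  ∫ t in Set.Ioi (0 : ℝ), (1 - Real.exp (-(s * t ^ 2 / 2))) * t ^ (-p - 1)

theorem one_sub_abs_cos_rpow_nonneg {s : ℝ} (hs : 0 ≤ s) (t : ℝ) : 0 ≤ 1 - |Real.cos t| ^ s := by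
  linarith [Real.rpow_le_one (abs_nonneg _) (Real.abs_cos_le_one t) hs]

theorem one_sub_abs_cos_rpow_le {s : ℝ} (hs : 2 ≤ s) (t : ℝ) :
    1 - |Real.cos t| ^ s ≤ s / 2 * t ^ 2 := by
  have h := one_add_mul_self_le_rpow_one_add (s := -Real.sin t ^ 2)
    (by linarith [Real.sin_sq_le_one t]) (p := s / 2) (by linarith)
  have e : |Real.cos t| ^ s = (1 + -Real.sin t ^ 2) ^ (s / 2) := by
    rw [← sub_eq_add_neg, ← Real.cos_sq', ← abs_rpow_eq_sq_rpow]; congr 1; ring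
  rw [e]
  have := Real.sin_sq_le_sq (x := t)
  nlinarith

theorem integrableOn_one_sub_abs_cos_rpow {p s : ℝ} (hp0 : 0 < p) (hp2 : p < 2) (hs : 2 ≤ s)
    (a : ℝ) : IntegrableOn (fun t => (1 - |Real.cos (a * t)| ^ s) * t ^ (-p - 1)) (Set.Ioi 0) := by
  refine integrableOn_mul_rpow (C := 1 + s / 2 * a ^ 2) hp0 hp2 (by fun_prop) (fun t _ => ?_)
    fun t _ => ?_
  · rw [abs_of_nonneg (one_sub_abs_cos_rpow_nonneg (by linarith) _)]
    have : 0 ≤ s / 2 * a ^ 2 := by positivity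
    linarith [Real.rpow_nonneg (abs_nonneg (Real.cos (a * t))) s]
  · rw [abs_of_nonneg (one_sub_abs_cos_rpow_nonneg (by linarith) _)]
    nlinarith [one_sub_abs_cos_rpow_le hs (a * t), sq_nonneg t]

theorem integral_one_sub_abs_cos_rpow (p s : ℝ) {a : ℝ} (ha : a ≠ 0) :
    ∫ t in Set.Ioi 0, (1 - |Real.cos (a * t)| ^ s) * t ^ (-p - 1) =
      |a| ^ p * absCosIntegral p s := by
  rw [absCosIntegral, ← integral_comp_mul_mul_rpow (fun u => 1 - |Real.cos u| ^ s) (abs_pos.2 ha) p]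
  refine setIntegral_congr_fun measurableSet_Ioi fun t ht => ?_
  have : Real.cos (|a| * t) = Real.cos (a * t) := by
    rw [← Real.cos_abs (a * t), abs_mul, abs_of_pos (show 0 < t from ht)]
  simp only [this]

theorem one_sub_exp_neg_le {x : ℝ} : 1 - Real.exp (-x) ≤ x := by
  linarith [Real.add_one_le_exp (-x)]

theorem integrableOn_one_sub_exp {p s : ℝ} (hp0 : 0 < p) (hp2 : p < 2) (hs : 0 ≤ s) :
    IntegrableOn (fun t => (1 - Real.exp (-(s * t ^ 2 / 2))) * t ^ (-p - 1)) (Set.Ioi 0) := by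
  have hnn : ∀ t : ℝ, 0 ≤ 1 - Real.exp (-(s * t ^ 2 / 2)) := fun t => by
    have : Real.exp (-(s * t ^ 2 / 2)) ≤ 1 := Real.exp_le_one_iff.2 (by
      have : 0 ≤ s * t ^ 2 / 2 := by positivity
      linarith)
    linarith
  refine integrableOn_mul_rpow (C := 1 + s / 2) hp0 hp2 (by fun_prop) (fun t _ => ?_)
    fun t _ => ?_
  · rw [abs_of_nonneg (hnn t)]
    linarith [Real.exp_pos (-(s * t ^ 2 / 2))]
  · rw [abs_of_nonneg (hnn t)]
    nlinarith [one_sub_exp_neg_le (x := s * t ^ 2 / 2), sq_nonneg t]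

theorem gaussIntegral_eq {p s : ℝ} (hs : 0 < s) :
    gaussIntegral p s = s ^ (p / 2) * gaussIntegral p 1 := by
  have h := integral_comp_mul_mul_rpow (fun u => 1 - Real.exp (-(1 * u ^ 2 / 2)))
    (Real.sqrt_pos.2 hs) p
  have e : √s ^ p = s ^ (p / 2) := by
    rw [Real.sqrt_eq_rpow, ← Real.rpow_mul hs.le]; congr 1; ring
  rw [e] at h
  rw [gaussIntegral, gaussIntegral, ← h]
  refine setIntegral_congr_fun measurableSet_Ioi fun t _ => ?_
  simp only [mul_pow, Real.sq_sqrt hs.le, one_mul]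

theorem prod_le_sum_weighted {n : ℕ} (w y : Fin n → ℝ) (hw : ∀ i, 0 ≤ w i) (hw1 : ∑ i, w i = 1)
    (hy : ∀ i, 0 ≤ y i) (hy1 : ∀ i, y i ≤ 1) : ∏ i, y i ≤ ∑ i, w i * y i ^ (w i)⁻¹ := by
  refine le_trans ?_ (Real.geom_mean_le_arith_mean_weighted Finset.univ w (fun i => y i ^ (w i)⁻¹)
    (fun i _ => hw i) hw1 fun i _ => Real.rpow_nonneg (hy i) _)
  refine Finset.prod_le_prod (fun i _ => hy i) fun i _ => ?_
  rcases (hw i).eq_or_lt with h | h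
  · simp [← h, hy1 i]
  · rw [← Real.rpow_mul (hy i), inv_mul_cancel₀ h.ne', Real.rpow_one]

theorem flat_khintchine {p : ℝ} (hp0 : 0 < p) (hp2 : p < 2)
    (hI : ∀ s, 2 ≤ s → gaussIntegral p s ≤ absCosIntegral p s) (l : List ℝ)
    (hl : ∀ b ∈ l, 2 * b ^ 2 ≤ sqSum l) :
    gaussIntegral p 1 * sqSum l ^ (p / 2) ≤ cosIntegral p * signAvg l (fun y => |y| ^ p) 0 := by
  rw [cosIntegral_mul_signAvg hp0 hp2]
  set S := sqSum l with hS
  have hprod : ∀ t : ℝ, (l.map fun a => Real.cos (a * t)).prod =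
      ∏ i : Fin l.length, Real.cos (l.get i * t) := fun t => by
    exact (Fin.prod_univ_fun_getElem l fun a => Real.cos (a * t)).symm
  have hsum : S = ∑ i : Fin l.length, l.get i ^ 2 := by
    exact (Fin.sum_univ_fun_getElem l (· ^ 2)).symm
  rcases (sqSum_nonneg l).eq_or_lt with h0 | h0
  · rw [hS, ← h0, Real.zero_rpow (by linarith), mul_zero]
    refine setIntegral_nonneg measurableSet_Ioi fun t ht => ?_
    refine mul_nonneg ?_ (Real.rpow_nonneg (le_of_lt ht) _)
    rw [hprod, sub_nonneg]
    refine (le_abs_self _).trans ?_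
    rw [Finset.abs_prod]
    exact Finset.prod_le_one (fun _ _ => abs_nonneg _) fun _ _ => Real.abs_cos_le_one _
  rw [← hS] at h0
  set w : Fin l.length → ℝ := fun i => l.get i ^ 2 / S with hw
  have hw0 : ∀ i, 0 ≤ w i := fun i => by positivity
  have hw1 : ∑ i, w i = 1 := by rw [← Finset.sum_div, ← hsum, div_self h0.ne']
  have hwi : ∀ i, l.get i ≠ 0 → 2 ≤ (w i)⁻¹ := fun i hi => by
    have : 0 < l.get i ^ 2 := by positivity
    rw [hw, inv_div, le_div_iff₀ this]
    exact hl _ (List.get_mem l i)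
  have hint : ∀ i, IntegrableOn
      (fun t => w i * ((1 - |Real.cos (l.get i * t)| ^ (w i)⁻¹) * t ^ (-p - 1))) (Set.Ioi 0) := by
    intro i
    by_cases hi : l.get i = 0
    · have : w i = 0 := by simp only [hw, hi]; simp
      simp [this]
    · exact (integrableOn_one_sub_abs_cos_rpow hp0 hp2 (hwi i hi) _).const_mul _
  calc gaussIntegral p 1 * S ^ (p / 2)
      = ∑ i, w i * (gaussIntegral p 1 * S ^ (p / 2)) := by rw [← Finset.sum_mul, hw1, one_mul]
    _ ≤ ∑ i, ∫ t in Set.Ioi 0,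
          w i * ((1 - |Real.cos (l.get i * t)| ^ (w i)⁻¹) * t ^ (-p - 1)) := by
        refine Finset.sum_le_sum fun i _ => ?_
        by_cases hi : l.get i = 0
        · have : w i = 0 := by simp only [hw, hi]; simp
          simp [this]
        rw [integral_const_mul, integral_one_sub_abs_cos_rpow p _ hi]
        refine mul_le_mul_of_nonneg_left ?_ (hw0 i)
        have hi2 : 0 < l.get i ^ 2 := by positivity
        have h1 := hI _ (hwi i hi)
        rw [gaussIntegral_eq (by linarith [hwi i hi])] at h1
        have e : |l.get i| ^ p = (l.get i ^ 2) ^ (p / 2) := by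
          rw [← abs_rpow_eq_sq_rpow]; congr 1; ring
        have e2 : S = l.get i ^ 2 * (w i)⁻¹ := by
          rw [hw, inv_div]; field_simp
        rw [e]
        conv_lhs => rw [e2, Real.mul_rpow hi2.le (by linarith [hwi i hi])]
        have := Real.rpow_nonneg hi2.le (p / 2)
        calc _ = (l.get i ^ 2) ^ (p / 2) * ((w i)⁻¹ ^ (p / 2) * gaussIntegral p 1) := by ring
          _ ≤ _ := by gcongr
    _ = ∫ t in Set.Ioi 0,
          ∑ i, w i * ((1 - |Real.cos (l.get i * t)| ^ (w i)⁻¹) * t ^ (-p - 1)) :=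
        (integral_finsetSum _ fun i _ => hint i).symm
    _ ≤ _ := by
        refine setIntegral_mono_on (integrable_finsetSum _ fun i _ => hint i)
          (integrableOn_one_sub_prod_cos hp0 hp2 l) measurableSet_Ioi fun t ht => ?_
        simp_rw [← mul_assoc]
        rw [← Finset.sum_mul]
        refine mul_le_mul_of_nonneg_right ?_ (Real.rpow_nonneg (le_of_lt ht) _)
        simp_rw [mul_sub, mul_one]
        rw [Finset.sum_sub_distrib, hw1, hprod]
        have h := prod_le_sum_weighted w (fun i => |Real.cos (l.get i * t)|) hw0 hw1
          (fun _ => abs_nonneg _) fun _ => Real.abs_cos_le_one _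
        rw [← Finset.abs_prod] at h
        linarith [le_abs_self (∏ i, Real.cos (l.get i * t))]

theorem nonneg_of_hasDerivAt_nonneg {f f' : ℝ → ℝ} {a b : ℝ} (hab : a ≤ b) (ha : 0 ≤ f a)
    (hf : ∀ x ∈ Set.Icc a b, HasDerivAt f (f' x) x) (hf' : ∀ x ∈ Set.Ioo a b, 0 ≤ f' x) :
    0 ≤ f b := by
  have hm : MonotoneOn f (Set.Icc a b) := by
    refine monotoneOn_of_deriv_nonneg (convex_Icc a b)
      (fun x hx => (hf x hx).continuousAt.continuousWithinAt)
      (fun x hx => (hf x (interior_subset hx)).differentiableAt.differentiableWithinAt)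
      fun x hx => ?_
    rw [(hf x (interior_subset hx)).deriv]
    rw [interior_Icc] at hx
    exact hf' x hx
  exact ha.trans (hm (Set.left_mem_Icc.2 hab) (Set.right_mem_Icc.2 hab) hab)

theorem cos_le_quartic {x : ℝ} (hx : 0 ≤ x) : Real.cos x ≤ 1 - x ^ 2 / 2 + x ^ 4 / 24 := by
  rw [← sub_nonneg]
  refine nonneg_of_hasDerivAt_nonneg (f := fun x => 1 - x ^ 2 / 2 + x ^ 4 / 24 - Real.cos x)
    (f' := fun x => Real.sin x - (x - x ^ 3 / 6)) hx (by simp) (fun y _ => ?_) fun y hy => ?_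
  · refine HasDerivAt.congr_deriv ((((hasDerivAt_const y (1 : ℝ)).sub
      ((hasDerivAt_pow 2 y).div_const 2)).add ((hasDerivAt_pow 4 y).div_const 24)).sub
      (Real.hasDerivAt_cos y)) ?_
    push_cast; ring
  · linarith [Real.sin_ge_sub_cube hy.1.le]

theorem sin_le_quintic {x : ℝ} (hx : 0 ≤ x) : Real.sin x ≤ x - x ^ 3 / 6 + x ^ 5 / 120 := by
  rw [← sub_nonneg]
  refine nonneg_of_hasDerivAt_nonneg (f := fun x => x - x ^ 3 / 6 + x ^ 5 / 120 - Real.sin x)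
    (f' := fun x => 1 - x ^ 2 / 2 + x ^ 4 / 24 - Real.cos x) hx (by simp) (fun y _ => ?_)
    fun y hy => ?_
  · refine HasDerivAt.congr_deriv ((((hasDerivAt_id y).sub
      ((hasDerivAt_pow 3 y).div_const 6)).add ((hasDerivAt_pow 5 y).div_const 120)).sub
      (Real.hasDerivAt_sin y)) ?_
    push_cast; ring
  · linarith [cos_le_quartic hy.1.le]

theorem sextic_le_cos {x : ℝ} (hx : 0 ≤ x) :
    1 - x ^ 2 / 2 + x ^ 4 / 24 - x ^ 6 / 720 ≤ Real.cos x := by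
  rw [← sub_nonneg]
  refine nonneg_of_hasDerivAt_nonneg
    (f := fun x => Real.cos x - (1 - x ^ 2 / 2 + x ^ 4 / 24 - x ^ 6 / 720))
    (f' := fun x => x - x ^ 3 / 6 + x ^ 5 / 120 - Real.sin x) hx (by simp) (fun y _ => ?_)
    fun y hy => ?_
  · refine HasDerivAt.congr_deriv ((Real.hasDerivAt_cos y).sub
      ((((hasDerivAt_const y (1 : ℝ)).sub ((hasDerivAt_pow 2 y).div_const 2)).add
      ((hasDerivAt_pow 4 y).div_const 24)).sub ((hasDerivAt_pow 6 y).div_const 720))) ?_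
    push_cast; ring
  · linarith [sin_le_quintic hy.1.le]

theorem mul_cos_le_sin {x : ℝ} (hx : 0 ≤ x) (hx' : x ≤ π) : x * Real.cos x ≤ Real.sin x := by
  rw [← sub_nonneg]
  refine nonneg_of_hasDerivAt_nonneg (f := fun x => Real.sin x - x * Real.cos x)
    (f' := fun x => x * Real.sin x) hx (by simp) (fun y _ => ?_) fun y hy => ?_
  · refine HasDerivAt.congr_deriv ((Real.hasDerivAt_sin y).sub
      ((hasDerivAt_id y).mul (Real.hasDerivAt_cos y))) ?_
    simp only [id]; ring
  · exact mul_nonneg hy.1.le (Real.sin_nonneg_of_nonneg_of_le_pi hy.1.le (hy.2.le.trans hx'))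

theorem three_mul_mul_cos_le {x : ℝ} (hx : 0 ≤ x) (hx' : x ≤ π) :
    3 * x * Real.cos x ≤ (3 - x ^ 2) * Real.sin x := by
  rw [← sub_nonneg]
  refine nonneg_of_hasDerivAt_nonneg
    (f := fun x => (3 - x ^ 2) * Real.sin x - 3 * x * Real.cos x)
    (f' := fun x => x * (Real.sin x - x * Real.cos x)) hx (by simp) (fun y _ => ?_) fun y hy => ?_
  · refine HasDerivAt.congr_deriv ((((hasDerivAt_const y (3 : ℝ)).sub (hasDerivAt_pow 2 y)).mul
      (Real.hasDerivAt_sin y)).sub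
      (((hasDerivAt_id y).const_mul 3).mul (Real.hasDerivAt_cos y))) ?_
    simp; ring
  · exact mul_nonneg hy.1.le (sub_nonneg.2 (mul_cos_le_sin hy.1.le (hy.2.le.trans hx')))

theorem pade_mul_cos_le {x : ℝ} (hx : 0 ≤ x) (hx' : x ≤ π) :
    (15 * x - x ^ 3) * Real.cos x ≤ (15 - 6 * x ^ 2) * Real.sin x := by
  rw [← sub_nonneg]
  refine nonneg_of_hasDerivAt_nonneg
    (f := fun x => (15 - 6 * x ^ 2) * Real.sin x - (15 * x - x ^ 3) * Real.cos x)
    (f' := fun x => x * ((3 - x ^ 2) * Real.sin x - 3 * x * Real.cos x)) hx (by simp)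
    (fun y _ => ?_) fun y hy => ?_
  · refine HasDerivAt.congr_deriv ((((hasDerivAt_const y (15 : ℝ)).sub
      ((hasDerivAt_pow 2 y).const_mul 6)).mul (Real.hasDerivAt_sin y)).sub
      ((((hasDerivAt_id y).const_mul 15).sub (hasDerivAt_pow 3 y)).mul
      (Real.hasDerivAt_cos y))) ?_
    simp; ring
  · exact mul_nonneg hy.1.le (sub_nonneg.2 (three_mul_mul_cos_le hy.1.le (hy.2.le.trans hx')))

theorem tan_ge_poly {x : ℝ} (hx : 0 ≤ x) (hx' : x ≤ 6 / 5) :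
    x * (1 + x ^ 2 / 3 * (1 + (2 / 5 * x ^ 2) + (2 / 5 * x ^ 2) ^ 2 + (2 / 5 * x ^ 2) ^ 3 +
      (2 / 5 * x ^ 2) ^ 4)) ≤ Real.tan x := by
  have hpi := Real.pi_gt_three
  have hc : 0 < Real.cos x := Real.cos_pos_of_mem_Ioo ⟨by linarith, by linarith⟩
  have h := pade_mul_cos_le hx (by linarith)
  rw [Real.tan_eq_sin_div_cos, le_div_iff₀ hc]
  have hx2 : x ^ 2 ≤ (6 / 5) ^ 2 := pow_le_pow_left₀ hx hx' 2
  have hd : 0 < 15 - 6 * x ^ 2 := by linarith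
  refine le_of_mul_le_mul_left (le_trans ?_ h) hd
  set r := 2 / 5 * x ^ 2 with hr
  have hr0 : 0 ≤ r := by positivity
  have e : (15 - 6 * x ^ 2) * (x * (1 + x ^ 2 / 3 * (1 + r + r ^ 2 + r ^ 3 + r ^ 4)) * Real.cos x) =
      (15 * x - x ^ 3) * Real.cos x - 5 * x ^ 3 * Real.cos x * r ^ 5 := by
    have : x ^ 2 = 5 / 2 * r := by rw [hr]; ring
    rw [show x ^ 3 = x * x ^ 2 by ring, this]; ring
  rw [e]
  have : 0 ≤ 5 * x ^ 3 * Real.cos x * r ^ 5 := by positivity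
  linarith

theorem neg_two_mul_log_cos_ge {x : ℝ} (hx : 0 ≤ x) (hx' : x ≤ 6 / 5) :
    x ^ 2 * (1 + (x ^ 2 / 6 + 2 / 45 * x ^ 4 + x ^ 6 / 75 + 8 / 1875 * x ^ 8 + 8 / 5625 * x ^ 10)) ≤
      -2 * Real.log (Real.cos x) := by
  rw [← sub_nonneg]
  have hpi := Real.pi_gt_three
  refine nonneg_of_hasDerivAt_nonneg
    (f := fun x => -2 * Real.log (Real.cos x) - x ^ 2 * (1 + (x ^ 2 / 6 + 2 / 45 * x ^ 4 +
      x ^ 6 / 75 + 8 / 1875 * x ^ 8 + 8 / 5625 * x ^ 10)))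
    (f' := fun x => 2 * (Real.tan x - x * (1 + x ^ 2 / 3 * (1 + (2 / 5 * x ^ 2) +
      (2 / 5 * x ^ 2) ^ 2 + (2 / 5 * x ^ 2) ^ 3 + (2 / 5 * x ^ 2) ^ 4)))) hx (by simp)
    (fun y hy => ?_) fun y hy => ?_
  · have hc : 0 < Real.cos y :=
      Real.cos_pos_of_mem_Ioo ⟨by linarith [hy.1], by linarith [hy.2]⟩
    refine HasDerivAt.congr_deriv ((((Real.hasDerivAt_cos y).log hc.ne').const_mul (-2)).sub
      ((hasDerivAt_pow 2 y).mul ((hasDerivAt_const y (1 : ℝ)).add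
      ((((((hasDerivAt_pow 2 y).div_const 6).add ((hasDerivAt_pow 4 y).const_mul (2 / 45))).add
      ((hasDerivAt_pow 6 y).div_const 75)).add ((hasDerivAt_pow 8 y).const_mul (8 / 1875))).add
      ((hasDerivAt_pow 10 y).const_mul (8 / 5625)))))) ?_
    rw [Real.tan_eq_sin_div_cos]
    simp
    ring
  · have := tan_ge_poly hy.1.le (hy.2.le.trans hx')
    linarith

theorem lt_of_neg_two_mul_log_cos_lt {x : ℝ} (hx' : x < π / 2)
    (hL : -2 * Real.log (Real.cos x) < 2) : x < 6 / 5 := by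
  by_contra! h
  have hpi := Real.pi_gt_three
  have h1 := neg_two_mul_log_cos_ge (x := 6 / 5) (by norm_num) le_rfl
  norm_num at h1
  have hc : 0 < Real.cos x := Real.cos_pos_of_mem_Ioo ⟨by linarith, hx'⟩
  have h2 := Real.log_le_log hc
    (Real.cos_le_cos_of_nonneg_of_le_pi (by norm_num) (by linarith) h)
  linarith

theorem taylor_comparison {t : ℝ} (ht0 : 0 < t) (ht1 : t ≤ 36 / 25) {w : ℝ}
    (hw : w = t / 6 + 2 / 45 * t ^ 2 + t ^ 3 / 75 + 8 / 1875 * t ^ 4 + 8 / 5625 * t ^ 5) :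
    (1 + w / 10) * (1 - t / 6 + t ^ 2 / 120) <
      (1 + w) * (1 + 3 / 2 * w) * (1 - t / 2 + t ^ 2 / 24 - t ^ 3 / 720) := by
  have hpow : ∀ k : ℕ, t ^ k ≤ (36 / 25) ^ k := fun k => pow_le_pow_left₀ ht0.le ht1 k
  have e : (1 + w) * (1 + 3 / 2 * w) * (1 - t / 2 + t ^ 2 / 24 - t ^ 3 / 720) -
      (1 + w / 10) * (1 - t / 6 + t ^ 2 / 120) =
      t * (1 / 15 - 43 / 1800 * t - 151 / 27000 * t ^ 2 - 5227 / 2700000 * t ^ 3 -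
      21419 / 32400000 * t ^ 4 - 699 / 500000 * t ^ 5 - 15953 / 121500000 * t ^ 6 -
      7067 / 168750000 * t ^ 7 - 11167 / 1012500000 * t ^ 8 - 581 / 189843750 * t ^ 9 -
      277 / 316406250 * t ^ 10 + 16 / 158203125 * t ^ 11 - 2 / 474609375 * t ^ 12) := by
    rw [hw]; ring
  have hpos : 0 < 1 / 15 - 43 / 1800 * t - 151 / 27000 * t ^ 2 - 5227 / 2700000 * t ^ 3 -
      21419 / 32400000 * t ^ 4 - 699 / 500000 * t ^ 5 - 15953 / 121500000 * t ^ 6 -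
      7067 / 168750000 * t ^ 7 - 11167 / 1012500000 * t ^ 8 - 581 / 189843750 * t ^ 9 -
      277 / 316406250 * t ^ 10 + 16 / 158203125 * t ^ 11 - 2 / 474609375 * t ^ 12 := by
    have h2 := hpow 2
    have h3 := hpow 3
    have h4 := hpow 4
    have h5 := hpow 5
    have h6 := hpow 6
    have h7 := hpow 7
    have h8 := hpow 8
    have h9 := hpow 9
    have h10 := hpow 10
    have h12 := hpow 12
    have h11 : 0 ≤ t ^ 11 := by positivity
    norm_num at h2 h3 h4 h5 h6 h7 h8 h9 h10 h12
    linarith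
  have := mul_pos ht0 hpos
  linarith

theorem comparison_mono {w z S Q : ℝ} (hw : 0 ≤ w) (hz : w ≤ z) (hS : S ≤ 1) (hQ : 1 / 5 ≤ Q)
    (h : (1 + w / 10) * S < (1 + w) * (1 + 3 / 2 * w) * Q) :
    (1 + z / 10) * S < (1 + z) * (1 + 3 / 2 * z) * Q := by
  have h1 : 0 ≤ z - w := sub_nonneg.2 hz
  have h2 : 0 ≤ (5 / 2 + 3 / 2 * (z + w)) * Q - S / 10 := by
    have : 0 ≤ 3 / 2 * (z + w) * Q :=
      mul_nonneg (mul_nonneg (by norm_num) (by linarith)) (by linarith)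
    linarith
  have h3 := mul_nonneg h1 h2
  have e : (1 + z) * (1 + 3 / 2 * z) * Q - (1 + z / 10) * S =
      (1 + w) * (1 + 3 / 2 * w) * Q - (1 + w / 10) * S +
      (z - w) * ((5 / 2 + 3 / 2 * (z + w)) * Q - S / 10) := by ring
  linarith

theorem tan_lt_mul_of_le {x z : ℝ} (hx : 0 < x) (hx' : x ≤ 6 / 5)
    (hz : x ^ 2 / 6 + 2 / 45 * x ^ 4 + x ^ 6 / 75 + 8 / 1875 * x ^ 8 + 8 / 5625 * x ^ 10 ≤ z) :
    (1 + z / 10) * Real.tan x < x * ((1 + z) * (1 + 3 / 2 * z)) := by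
  have hpi := Real.pi_gt_three
  have hc : 0 < Real.cos x := Real.cos_pos_of_mem_Ioo ⟨by linarith, by linarith⟩
  have ht0 : 0 < x ^ 2 := by positivity
  have ht1 : x ^ 2 ≤ 36 / 25 := by
    have := pow_le_pow_left₀ hx.le hx' 2
    norm_num at this; linarith
  have hmain := taylor_comparison ht0 ht1 rfl
  have hw0 : 0 ≤ x ^ 2 / 6 + 2 / 45 * x ^ 4 + x ^ 6 / 75 + 8 / 1875 * x ^ 8 +
    8 / 5625 * x ^ 10 := by positivity
  have hz0 : 0 ≤ z := hw0.trans hz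
  have hmain' := comparison_mono (z := z) (by positivity) (le_trans (le_of_eq (by ring)) hz)
    (by nlinarith) (by
      have h3 := pow_le_pow_left₀ ht0.le ht1 3
      norm_num at h3
      have : 0 ≤ (x ^ 2) ^ 2 := by positivity
      linarith) hmain
  rw [Real.tan_eq_sin_div_cos, ← mul_div_assoc, div_lt_iff₀ hc]
  calc (1 + z / 10) * Real.sin x
      ≤ (1 + z / 10) * (x - x ^ 3 / 6 + x ^ 5 / 120) := by gcongr; exact sin_le_quintic hx.le
    _ = x * ((1 + z / 10) * (1 - x ^ 2 / 6 + (x ^ 2) ^ 2 / 120)) := by ring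
    _ < x * ((1 + z) * (1 + 3 / 2 * z) *
        (1 - x ^ 2 / 2 + (x ^ 2) ^ 2 / 24 - (x ^ 2) ^ 3 / 720)) := by gcongr
    _ = x * ((1 + z) * (1 + 3 / 2 * z)) *
        (1 - x ^ 2 / 2 + x ^ 4 / 24 - x ^ 6 / 720) := by ring
    _ ≤ x * ((1 + z) * (1 + 3 / 2 * z)) * Real.cos x := by gcongr; exact sextic_le_cos hx.le

/-- The `k`-th positive zero of the cosine. -/
noncomputable def cosZero (k : ℕ) : ℝ := (k + 1 / 2) * π

/-- The difference of `u ^ (-p)` at the two points at distance `v` from the `k`-th zero of the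
cosine. -/
noncomputable def zeroDiff (p : ℝ) (k : ℕ) (v : ℝ) : ℝ :=
  (cosZero k - v) ^ (-p) - (cosZero k + v) ^ (-p)

/-- The sum of `u ^ (-p - 1)` over the two points at distance `v` from the `k`-th zero of the
cosine. -/
noncomputable def zeroWeight (p : ℝ) (k : ℕ) (v : ℝ) : ℝ :=
  (cosZero k - v) ^ (-p - 1) + (cosZero k + v) ^ (-p - 1)

/-- The sum of `zeroDiff p k` over all zeros. -/
noncomputable def foldedDiff (p v : ℝ) : ℝ := ∑' k, zeroDiff p k v

/-- The density on `(0, π / 2)` obtained by folding `u ^ (-p - 1)` along `u ↦ |cos u|`. -/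
noncomputable def foldedWeight (p v : ℝ) : ℝ := ∑' k, zeroWeight p k v

theorem cosZero_sub_pos (k : ℕ) {v : ℝ} (hv : v < π / 2) : 0 < cosZero k - v := by
  have : 0 ≤ k * π := by positivity
  unfold cosZero
  linarith

theorem cosZero_add_pos (k : ℕ) {v : ℝ} (hv : -(π / 2) < v) : 0 < cosZero k + v := by
  have : 0 ≤ k * π := by positivity
  unfold cosZero
  linarith

theorem hasDerivAt_zeroDiff (p : ℝ) (k : ℕ) {v : ℝ} (hv : v ∈ Set.Ioo (-(π / 2)) (π / 2)) :
    HasDerivAt (zeroDiff p k) (p * zeroWeight p k v) v := by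
  have h1 := ((hasDerivAt_id v).const_sub (cosZero k)).rpow_const (p := -p)
    (Or.inl (cosZero_sub_pos k hv.2).ne')
  have h2 := ((hasDerivAt_id v).const_add (cosZero k)).rpow_const (p := -p)
    (Or.inl (cosZero_add_pos k hv.1).ne')
  refine (h1.sub h2).congr_deriv ?_
  simp only [zeroWeight, id]
  ring

theorem zeroWeight_nonneg (p : ℝ) (k : ℕ) {v : ℝ} (hv : v ∈ Set.Ioo (-(π / 2)) (π / 2)) :
    0 ≤ zeroWeight p k v :=
  add_nonneg (Real.rpow_nonneg (cosZero_sub_pos k hv.2).le _)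
    (Real.rpow_nonneg (cosZero_add_pos k hv.1).le _)

theorem zeroWeight_pos (p : ℝ) (k : ℕ) {v : ℝ} (hv : v ∈ Set.Ioo (-(π / 2)) (π / 2)) :
    0 < zeroWeight p k v :=
  add_pos (Real.rpow_pos_of_pos (cosZero_sub_pos k hv.2) _)
    (Real.rpow_pos_of_pos (cosZero_add_pos k hv.1) _)

theorem zeroWeight_le {p r v : ℝ} (hp : 0 < p) (k : ℕ) (hr0 : 0 ≤ r) (hr : r < π / 2)
    (hv : v ∈ Set.Ioo (-r) r) :
    zeroWeight p k v ≤ 2 * (π / 2 - r) ^ (-p - 1) * ((k : ℝ) + 1) ^ (-p - 1) := by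
  have hd : 0 < π / 2 - r := by linarith
  have hk : (0 : ℝ) ≤ k := k.cast_nonneg
  have hb : (π / 2 - r) * (k + 1) ≤ cosZero k - r := by
    have : (π / 2 - r) * k ≤ π * k := by
      gcongr
      linarith [Real.pi_pos]
    unfold cosZero
    linarith
  have key : ∀ y, cosZero k - r ≤ y →
      y ^ (-p - 1) ≤ (π / 2 - r) ^ (-p - 1) * ((k : ℝ) + 1) ^ (-p - 1) := by
    intro y hy
    rw [← Real.mul_rpow hd.le (by positivity)]
    exact Real.rpow_le_rpow_of_nonpos (by positivity) (hb.trans hy) (by linarith)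
  have h1 := key (cosZero k - v) (by linarith [hv.2])
  have h2 := key (cosZero k + v) (by linarith [hv.1])
  unfold zeroWeight
  linarith

theorem summable_zeroWeight_bound {p : ℝ} (hp : 0 < p) (r : ℝ) :
    Summable fun k : ℕ => 2 * (π / 2 - r) ^ (-p - 1) * ((k : ℝ) + 1) ^ (-p - 1) := by
  refine Summable.mul_left _ ?_
  have h := (Real.summable_nat_rpow (p := -p - 1)).2 (by linarith)
  have := (summable_nat_add_iff 1).2 h
  simpa using this

theorem exists_between_abs {v : ℝ} (hv : v ∈ Set.Ioo (-(π / 2)) (π / 2)) :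
    ∃ r, 0 ≤ r ∧ r < π / 2 ∧ v ∈ Set.Ioo (-r) r := by
  obtain ⟨r, h1, h2⟩ := exists_between (abs_lt.2 hv)
  exact ⟨r, (abs_nonneg v).trans h1.le, h2, abs_lt.1 h1⟩

theorem summable_zeroWeight {p : ℝ} (hp : 0 < p) {v : ℝ} (hv : v ∈ Set.Ioo (-(π / 2)) (π / 2)) :
    Summable fun k => zeroWeight p k v := by
  obtain ⟨r, hr0, hr, hvr⟩ := exists_between_abs hv
  exact Summable.of_nonneg_of_le (fun k => zeroWeight_nonneg p k hv)
    (fun k => zeroWeight_le hp k hr0 hr hvr) (summable_zeroWeight_bound hp r)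

theorem zeroDiff_zero (p : ℝ) (k : ℕ) : zeroDiff p k 0 = 0 := by simp [zeroDiff]

theorem foldedDiff_zero (p : ℝ) : foldedDiff p 0 = 0 := by simp [foldedDiff, zeroDiff_zero]

theorem hasDerivAt_foldedDiff_aux {p : ℝ} (hp : 0 < p) {v : ℝ}
    (hv : v ∈ Set.Ioo (-(π / 2)) (π / 2)) :
    (Summable fun k => zeroDiff p k v) ∧ HasDerivAt (foldedDiff p) (p * foldedWeight p v) v := by
  obtain ⟨r, hr0, hr, hvr⟩ := exists_between_abs hv
  have hsub : ∀ y ∈ Set.Ioo (-r) r, y ∈ Set.Ioo (-(π / 2)) (π / 2) := fun y hy =>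
    ⟨by linarith [hy.1], by linarith [hy.2]⟩
  have hu := (summable_zeroWeight_bound hp r).mul_left p
  have hd : ∀ (k : ℕ), ∀ y ∈ Set.Ioo (-r) r, HasDerivAt (zeroDiff p k) (p * zeroWeight p k y) y :=
    fun k y hy => hasDerivAt_zeroDiff p k (hsub y hy)
  have hb : ∀ (k : ℕ), ∀ y ∈ Set.Ioo (-r) r, ‖p * zeroWeight p k y‖ ≤
      p * (2 * (π / 2 - r) ^ (-p - 1) * ((k : ℝ) + 1) ^ (-p - 1)) := by
    intro k y hy
    rw [Real.norm_of_nonneg (mul_nonneg hp.le (zeroWeight_nonneg p k (hsub y hy)))]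
    exact mul_le_mul_of_nonneg_left (zeroWeight_le hp k hr0 hr hy) hp.le
  have h0 : (0 : ℝ) ∈ Set.Ioo (-r) r := by
    have : 0 < r := by linarith [hvr.1, hvr.2]
    exact ⟨by linarith, this⟩
  have hs0 : Summable fun k => zeroDiff p k 0 := by simp [zeroDiff_zero, summable_zero]
  refine ⟨summable_of_summable_hasDerivAt_of_isPreconnected hu isOpen_Ioo isPreconnected_Ioo hd hb
    h0 hs0 hvr, ?_⟩
  have := hasDerivAt_tsum_of_isPreconnected hu isOpen_Ioo isPreconnected_Ioo hd hb h0 hs0 hvr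
  rwa [tsum_mul_left] at this

theorem summable_zeroDiff {p : ℝ} (hp : 0 < p) {v : ℝ} (hv : v ∈ Set.Ioo (-(π / 2)) (π / 2)) :
    Summable fun k => zeroDiff p k v := (hasDerivAt_foldedDiff_aux hp hv).1

theorem hasDerivAt_foldedDiff {p : ℝ} (hp : 0 < p) {v : ℝ}
    (hv : v ∈ Set.Ioo (-(π / 2)) (π / 2)) :
    HasDerivAt (foldedDiff p) (p * foldedWeight p v) v := (hasDerivAt_foldedDiff_aux hp hv).2

theorem foldedWeight_pos {p : ℝ} (hp : 0 < p) {v : ℝ} (hv : v ∈ Set.Ioo (-(π / 2)) (π / 2)) :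
    0 < foldedWeight p v :=
  (summable_zeroWeight hp hv).tsum_pos (fun k => zeroWeight_nonneg p k hv) 0
    (zeroWeight_pos p 0 hv)

theorem foldedDiff_strictMonoOn {p : ℝ} (hp : 0 < p) :
    StrictMonoOn (foldedDiff p) (Set.Ioo (-(π / 2)) (π / 2)) := by
  refine strictMonoOn_of_deriv_pos (convex_Ioo _ _)
    (fun v hv => (hasDerivAt_foldedDiff hp hv).continuousAt.continuousWithinAt) fun v hv => ?_
  rw [interior_Ioo] at hv
  rw [(hasDerivAt_foldedDiff hp hv).deriv]
  exact mul_pos hp (foldedWeight_pos hp hv)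

theorem foldedDiff_pos {p : ℝ} (hp : 0 < p) {v : ℝ} (hv : v ∈ Set.Ioo 0 (π / 2)) :
    0 < foldedDiff p v := by
  have hpi := Real.pi_pos
  rw [← foldedDiff_zero p]
  exact foldedDiff_strictMonoOn hp ⟨by linarith, by linarith⟩ ⟨by linarith [hv.1], hv.2⟩ hv.1

theorem zeroDiff_nonneg {p : ℝ} (hp : 0 < p) (k : ℕ) {v : ℝ} (hv : v ∈ Set.Ico 0 (π / 2)) :
    0 ≤ zeroDiff p k v := by
  rw [zeroDiff, sub_nonneg]
  exact Real.rpow_le_rpow_of_nonpos (cosZero_sub_pos k hv.2) (by linarith [hv.1]) (by linarith)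

theorem le_foldedDiff {p : ℝ} (hp : 0 < p) {v : ℝ} (hv : v ∈ Set.Ico 0 (π / 2)) :
    (π / 2 - v) ^ (-p) - (π / 2) ^ (-p) ≤ foldedDiff p v := by
  have hpi := Real.pi_pos
  have hv' : v ∈ Set.Ioo (-(π / 2)) (π / 2) := ⟨by linarith [hv.1], hv.2⟩
  have h := (summable_zeroDiff hp hv').le_tsum 0 (fun k _ => zeroDiff_nonneg hp k hv)
  refine le_trans ?_ h
  have e : cosZero 0 = π / 2 := by simp [cosZero]; ring
  rw [zeroDiff, e]
  have := Real.rpow_le_rpow_of_nonpos (x := π / 2) (y := π / 2 + v) (z := -p) (by linarith)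
    (by linarith [hv.1]) (by linarith)
  linarith

theorem exists_foldedDiff_eq {p z : ℝ} (hp : 0 < p) (hz : 0 < z) :
    ∃ v ∈ Set.Ioo 0 (π / 2), foldedDiff p v = z := by
  have hpi : 0 < π / 2 := by linarith [Real.pi_pos]
  set b := (π / 2) ^ (-p) with hb
  have hb0 : 0 < b := Real.rpow_pos_of_pos hpi _
  set d := (z + b) ^ (-p⁻¹) with hd
  have hd0 : 0 < d := by positivity
  have hdp : d ^ (-p) = z + b := by
    rw [hd, ← Real.rpow_mul (by positivity), neg_mul_neg, inv_mul_cancel₀ hp.ne', Real.rpow_one]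
  have hdlt : d < π / 2 := by
    by_contra! h
    have := Real.rpow_le_rpow_of_nonpos hpi h (z := -p) (by linarith)
    linarith
  have hmem : π / 2 - d ∈ Set.Ico 0 (π / 2) := ⟨by linarith, by linarith⟩
  have h1 := le_foldedDiff hp hmem
  rw [sub_sub_cancel, hdp, ← hb, add_sub_cancel_right] at h1
  have hcont : ContinuousOn (foldedDiff p) (Set.Icc 0 (π / 2 - d)) := fun v hv =>
    (hasDerivAt_foldedDiff hp ⟨by linarith [hv.1], by linarith [hv.2]⟩).continuousAt
      |>.continuousWithinAt
  obtain ⟨v, hv, hvz⟩ := intermediate_value_Icc hmem.1 hcont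
    (show z ∈ Set.Icc (foldedDiff p 0) (foldedDiff p (π / 2 - d)) from
      ⟨by rw [foldedDiff_zero]; exact hz.le, h1⟩)
  refine ⟨v, ⟨lt_of_le_of_ne hv.1 ?_, by linarith [hv.2]⟩, hvz⟩
  rintro rfl
  rw [foldedDiff_zero] at hvz
  exact hz.ne hvz

theorem one_sub_mul_le_rpow_neg {x r : ℝ} (hx : 0 < x) (hr : 0 ≤ r) :
    1 - r * (x - 1) ≤ x ^ (-r) := by
  rw [Real.rpow_def_of_pos hx]
  have h1 := Real.add_one_le_exp (Real.log x * -r)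
  have h2 := mul_le_mul_of_nonneg_left (Real.log_le_sub_one_of_pos hx) hr
  linarith

theorem rpow_neg_sub_rpow_neg_le {p a b : ℝ} (hp : 0 < p) (ha : 0 < a) (hab : a ≤ b) :
    a ^ (-p) - b ^ (-p) ≤ p * ((b - a) / 2) * (a ^ (-p - 1) + b ^ (-p - 1)) := by
  rw [← sub_nonneg]
  refine nonneg_of_hasDerivAt_nonneg
    (f := fun b => p * ((b - a) / 2) * (a ^ (-p - 1) + b ^ (-p - 1)) - (a ^ (-p) - b ^ (-p)))
    (f' := fun b => p / 2 * (a ^ (-p - 1) - b ^ (-p - 1) - (p + 1) * (b - a) * b ^ (-p - 1 - 1)))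
    hab (by simp) (fun y hy => ?_) fun y hy => ?_
  · have hy0 : 0 < y := ha.trans_le hy.1
    refine HasDerivAt.congr_deriv ((((((hasDerivAt_id y).sub_const a).div_const 2).const_mul p).mul
      ((Real.hasDerivAt_rpow_const (p := -p - 1) (Or.inl hy0.ne')).const_add _)).sub
      ((Real.hasDerivAt_rpow_const (p := -p) (Or.inl hy0.ne')).const_sub _)) ?_
    simp only [id]
    ring
  · have hy0 : 0 < y := ha.trans hy.1
    have h := one_sub_mul_le_rpow_neg (x := a / y) (r := p + 1) (by positivity) (by linarith)
    rw [neg_add', Real.div_rpow ha.le hy0.le] at h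
    have hyp : 0 < y ^ (-p - 1) := Real.rpow_pos_of_pos hy0 _
    rw [le_div_iff₀ hyp] at h
    have e : y ^ (-p - 1 - 1) = y ^ (-p - 1) / y := Real.rpow_sub_one hy0.ne' _
    rw [e]
    have e2 : (1 - (p + 1) * (a / y - 1)) * y ^ (-p - 1) =
        y ^ (-p - 1) + (p + 1) * (y - a) * (y ^ (-p - 1) / y) := by field_simp; ring
    rw [e2] at h
    exact mul_nonneg (by positivity) (by linarith)

theorem foldedDiff_le_mul_foldedWeight {p v : ℝ} (hp : 0 < p) (hv : v ∈ Set.Ico 0 (π / 2)) :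
    foldedDiff p v ≤ p * v * foldedWeight p v := by
  have hpi := Real.pi_pos
  have hv' : v ∈ Set.Ioo (-(π / 2)) (π / 2) := ⟨by linarith [hv.1], hv.2⟩
  rw [foldedDiff, foldedWeight, ← tsum_mul_left]
  refine (summable_zeroDiff hp hv').tsum_le_tsum (fun k => ?_)
    ((summable_zeroWeight hp hv').mul_left _)
  have := rpow_neg_sub_rpow_neg_le hp (cosZero_sub_pos k hv.2)
    (b := cosZero k + v) (by linarith [hv.1])
  rw [show (cosZero k + v - (cosZero k - v)) / 2 = v by ring] at this
  exact this

theorem rpow_neg_le_sum_add {p x : ℝ} (hp : 0 < p) (hx : x ∈ Set.Ioo 0 (π / 2)) (N : ℕ) :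
    x ^ (-p) - ∑ k ∈ Finset.range (N + 1), zeroDiff p k (π / 2 - x) -
        ((N + 1) * π - x) ^ (-p) ≤
      p * x * (∑ k ∈ Finset.range (N + 1), zeroWeight p k (π / 2 - x) - x ^ (-p - 1) -
        ((N + 1) * π - x) ^ (-p - 1)) := by
  have e1 : ∀ k : ℕ, cosZero k - (π / 2 - x) = k * π + x := fun k => by unfold cosZero; ring
  have e2 : ∀ k : ℕ, cosZero k + (π / 2 - x) = (k + 1) * π - x := fun k => by unfold cosZero; ring
  induction N with
  | zero => simp [zeroDiff, zeroWeight, e1, e2]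
  | succ N ih =>
    rw [Finset.sum_range_succ, Finset.sum_range_succ _ (N + 1)]
    have hN : 0 ≤ N * π := by positivity
    have h := rpow_neg_sub_rpow_neg_le hp (a := (N + 1) * π - x) (b := (N + 1) * π + x)
      (by linarith [hx.2, Real.pi_pos]) (by linarith [hx.1])
    rw [show ((N + 1) * π + x - ((N + 1) * π - x)) / 2 = x by ring] at h
    have d1 : zeroDiff p (N + 1) (π / 2 - x) =
        ((N + 1) * π + x) ^ (-p) - ((((N + 1 : ℕ) : ℝ) + 1) * π - x) ^ (-p) := by
      rw [zeroDiff, e1, e2]; push_cast; rfl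
    have d2 : zeroWeight p (N + 1) (π / 2 - x) =
        ((N + 1) * π + x) ^ (-p - 1) + ((((N + 1 : ℕ) : ℝ) + 1) * π - x) ^ (-p - 1) := by
      rw [zeroWeight, e1, e2]; push_cast; rfl
    rw [d1, d2]
    linarith

theorem rpow_neg_le_foldedWeight {p x : ℝ} (hp : 0 < p) (hx : x ∈ Set.Ioo 0 (π / 2)) :
    (p + 1) * x ^ (-p) - foldedDiff p (π / 2 - x) ≤ p * x * foldedWeight p (π / 2 - x) := by
  have hv : π / 2 - x ∈ Set.Ioo (-(π / 2)) (π / 2) :=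
    ⟨by linarith [hx.2, Real.pi_pos], by linarith [hx.1, Real.pi_pos]⟩
  have h1 := (summable_zeroDiff hp hv).hasSum.tendsto_sum_nat.comp (tendsto_add_atTop_nat 1)
  have h2 := (summable_zeroWeight hp hv).hasSum.tendsto_sum_nat.comp (tendsto_add_atTop_nat 1)
  have hlim : Tendsto (fun N : ℕ => ((N : ℝ) + 1) * π - x) atTop atTop := by
    refine tendsto_atTop_add_const_right _ _ ?_
    exact (tendsto_atTop_add_const_right _ _ tendsto_natCast_atTop_atTop).atTop_mul_const
      Real.pi_pos
  have h3 := (tendsto_rpow_neg_atTop hp).comp hlim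
  have h4 := (tendsto_rpow_neg_atTop (show 0 < p + 1 by linarith)).comp hlim
  have hle := le_of_tendsto_of_tendsto' ((h1.const_sub (x ^ (-p))).sub h3)
    (((h2.sub_const (x ^ (-p - 1))).sub h4).const_mul (p * x)) fun N => by
      simp only [Function.comp]
      rw [neg_add']
      exact rpow_neg_le_sum_add hp hx N
  have e : x * x ^ (-p - 1) = x ^ (-p) := by
    rw [Real.rpow_sub_one hx.1.ne']; field_simp [hx.1.ne']
  unfold foldedDiff foldedWeight
  have e' : p * x * x ^ (-p - 1) = p * x ^ (-p) := by rw [mul_assoc, e]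
  linarith

theorem one_add_le_rpow_mul {z q : ℝ} (hz : 0 ≤ z) (hq0 : 0 ≤ q) (hq : q ≤ 1) :
    1 + z ≤ (1 + z) ^ q * (1 + (1 - q) * z) := by
  have h := rpow_one_add_le_one_add_mul_self (s := z) (by linarith) (p := 1 - q)
    (by linarith) (by linarith)
  have hp : 0 < (1 + z) ^ q := Real.rpow_pos_of_pos (by linarith) _
  calc 1 + z = (1 + z) ^ q * (1 + z) ^ (1 - q) := by
        rw [← Real.rpow_add (by linarith)]; simp
    _ ≤ _ := mul_le_mul_of_nonneg_left h hp.le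

theorem tan_lt_of_foldedDiff_eq {p x : ℝ} (hp : 9 / 5 ≤ p) (hp2 : p < 2)
    (hx : x ∈ Set.Ioo 0 (π / 2))
    (h : foldedDiff p (π / 2 - x) ^ (-(2 / p)) = -2 * Real.log (Real.cos x)) :
    Real.tan x < -2 * Real.log (Real.cos x) *
      (foldedWeight p (π / 2 - x) / foldedDiff p (π / 2 - x)) := by
  have hp0 : 0 < p := by linarith
  have hv : π / 2 - x ∈ Set.Ioo 0 (π / 2) := ⟨by linarith [hx.2], by linarith [hx.1]⟩
  have hg := foldedDiff_pos hp0 hv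
  have hW : 0 < foldedWeight p (π / 2 - x) :=
    foldedWeight_pos hp0 ⟨by linarith [hv.1, hv.2], hv.2⟩
  set g := foldedDiff p (π / 2 - x) with hgdef
  set W := foldedWeight p (π / 2 - x) with hWdef
  set L := -2 * Real.log (Real.cos x) with hL
  rcases le_or_gt 2 L with h2 | h2
  · have h1 := foldedDiff_le_mul_foldedWeight hp0 ⟨hv.1.le, hv.2⟩
    rw [← hgdef, ← hWdef] at h1
    have h3 : 1 / (p * (π / 2 - x)) ≤ W / g := by
      rw [div_le_div_iff₀ (mul_pos hp0 hv.1) hg]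
      linarith
    have h4 : Real.tan x ≤ 1 / (π / 2 - x) := by
      have := mul_cos_le_sin hv.1.le (by linarith [hv.2, Real.pi_pos])
      rw [Real.cos_pi_div_two_sub, Real.sin_pi_div_two_sub] at this
      have hc : 0 < Real.cos x := Real.cos_pos_of_mem_Ioo ⟨by linarith [hx.1, hx.2], hx.2⟩
      rw [Real.tan_eq_sin_div_cos, div_le_div_iff₀ hc hv.1]
      linarith
    have h5 : 1 / (π / 2 - x) < 2 * (1 / (p * (π / 2 - x))) := by
      rw [mul_one_div, div_lt_div_iff₀ hv.1 (mul_pos hp0 hv.1)]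
      have := mul_lt_mul_of_pos_right hp2 hv.1
      linarith
    calc Real.tan x < 2 * (1 / (p * (π / 2 - x))) := h4.trans_lt h5
      _ ≤ L * (W / g) := mul_le_mul h2 h3 (by have := hv.1; positivity) (by linarith)
  · have hx65 := lt_of_neg_two_mul_log_cos_lt hx.2 h2
    have hx0 : 0 < x := hx.1
    have hLge := neg_two_mul_log_cos_ge hx0.le hx65.le
    rw [← hL] at hLge
    set z := L / x ^ 2 - 1 with hz
    have hLz : L = x ^ 2 * (1 + z) := by rw [hz]; field_simp; ring
    have hzpoly :
        x ^ 2 / 6 + 2 / 45 * x ^ 4 + x ^ 6 / 75 + 8 / 1875 * x ^ 8 + 8 / 5625 * x ^ 10 ≤ z := by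
      rw [hLz] at hLge
      have := le_of_mul_le_mul_left hLge (by positivity)
      linarith
    have hz0 : 0 ≤ z := le_trans (by positivity) hzpoly
    have htan := tan_lt_mul_of_le hx0 hx65.le hzpoly
    have hginv : g = L ^ (-(p / 2)) := by
      rw [← h, ← Real.rpow_mul hg.le]
      rw [show -(2 / p) * -(p / 2) = 1 by field_simp, Real.rpow_one]
    set b := x ^ (-p) / g with hb
    have hbq : b = (1 + z) ^ (p / 2) := by
      have e : x ^ (-p) = (x ^ 2) ^ (-(p / 2)) := by
        rw [← Real.rpow_natCast x 2, ← Real.rpow_mul hx0.le]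
        congr 1; push_cast; ring
      rw [hb, hginv, hLz, Real.mul_rpow (by positivity) (by linarith), e,
        Real.rpow_neg (by linarith : 0 ≤ 1 + z)]
      have : 0 < (x ^ 2) ^ (-(p / 2)) := by positivity
      field_simp
    have hb1 := one_add_le_rpow_mul hz0 (q := p / 2) (by linarith) (by linarith)
    rw [← hbq] at hb1
    have hD : 0 < 1 + z / 10 := by linarith
    have hW1 := rpow_neg_le_foldedWeight hp0 hx
    rw [← hgdef, ← hWdef] at hW1
    have hxb : x ^ (-p) = b * g := by rw [hb]; field_simp
    rw [hxb] at hW1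
    set w := W / g with hw
    have hWw : W = w * g := by rw [hw]; field_simp
    rw [hWw] at hW1
    have hW2 : (p + 1) * b - 1 ≤ p * x * w := by
      refine le_of_mul_le_mul_right ?_ hg
      linarith
    have hW3 : 0 ≤ x * w := by positivity
    have hW4 : 1 + 3 / 2 * z ≤ (x * w) * (1 + z / 10) := by
      have h1 : 1 + 3 / 2 * z ≤ (x * w) * (1 + (1 - p / 2) * z) := by
        refine le_of_mul_le_mul_left ?_ hp0
        have := mul_le_mul_of_nonneg_right hW2 (show 0 ≤ 1 + (1 - p / 2) * z by nlinarith)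
        have := mul_le_mul_of_nonneg_left hb1 (show 0 ≤ p + 1 by linarith)
        linarith
      refine h1.trans (mul_le_mul_of_nonneg_left ?_ hW3)
      nlinarith
    have : (1 + z / 10) * Real.tan x < (1 + z / 10) * (L * w) := by
      refine htan.trans_le ?_
      rw [hLz]
      have := mul_le_mul_of_nonneg_left hW4 (show 0 ≤ x * (1 + z) by positivity)
      linarith
    exact lt_of_mul_lt_mul_left this hD.le

/-- Once the folded comparison holds at one point, it holds at all points closer to `0`. -/
theorem neg_two_mul_log_sin_le_of_le {p v₁ v : ℝ} (hp : 9 / 5 ≤ p) (hp2 : p < 2)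
    (hv₁ : v₁ < π / 2) (hv : 0 < v) (hvv : v ≤ v₁)
    (h : -2 * Real.log (Real.sin v₁) ≤ foldedDiff p v₁ ^ (-(2 / p))) :
    -2 * Real.log (Real.sin v) ≤ foldedDiff p v ^ (-(2 / p)) := by
  have hp0 : 0 < p := by linarith
  have hmem : ∀ x ∈ Set.Icc (π / 2 - v₁) (π / 2 - v), x ∈ Set.Ioo 0 (π / 2) := fun x hx =>
    ⟨by linarith [hx.1], by linarith [hx.2]⟩
  have hL : ∀ x ∈ Set.Ioo 0 (π / 2), HasDerivAt (fun x => -2 * Real.log (Real.cos x))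
      (2 * Real.tan x) x := by
    intro x hx
    have hc : 0 < Real.cos x := Real.cos_pos_of_mem_Ioo ⟨by linarith [hx.1, hx.2], hx.2⟩
    refine (((Real.hasDerivAt_cos x).log hc.ne').const_mul (-2)).congr_deriv ?_
    rw [Real.tan_eq_sin_div_cos]
    ring
  have hK : ∀ x ∈ Set.Ioo 0 (π / 2), HasDerivAt (fun x => foldedDiff p (π / 2 - x) ^ (-(2 / p)))
      (2 * (foldedDiff p (π / 2 - x) ^ (-(2 / p)) *
        (foldedWeight p (π / 2 - x) / foldedDiff p (π / 2 - x)))) x := by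
    intro x hx
    have hy : π / 2 - x ∈ Set.Ioo 0 (π / 2) := ⟨by linarith [hx.2], by linarith [hx.1]⟩
    have hg := foldedDiff_pos hp0 hy
    have h1 := (hasDerivAt_foldedDiff hp0 ⟨by linarith [hy.1, hy.2], hy.2⟩).comp x
      ((hasDerivAt_id x).const_sub (π / 2))
    refine (h1.rpow_const (p := -(2 / p)) (Or.inl hg.ne')).congr_deriv ?_
    simp only [Function.comp]
    rw [Real.rpow_sub_one hg.ne']
    field_simp
  have key := image_le_of_deriv_right_lt_deriv_boundary'
    (f := fun x => -2 * Real.log (Real.cos x)) (f' := fun x => 2 * Real.tan x)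
    (B := fun x => foldedDiff p (π / 2 - x) ^ (-(2 / p)))
    (a := π / 2 - v₁) (b := π / 2 - v)
    (fun x hx => (hL x (hmem x hx)).continuousAt.continuousWithinAt)
    (fun x hx => (hL x (hmem x ⟨hx.1, hx.2.le⟩)).hasDerivWithinAt)
    (by simpa [Real.cos_pi_div_two_sub] using h)
    (fun x hx => (hK x (hmem x hx)).continuousAt.continuousWithinAt)
    (fun x hx => (hK x (hmem x ⟨hx.1, hx.2.le⟩)).hasDerivWithinAt)
    (fun x hx he => by
      have := tan_lt_of_foldedDiff_eq hp hp2 (hmem x ⟨hx.1, hx.2.le⟩) he.symm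
      rw [← he]
      linarith)
  have := key (x := π / 2 - v) ⟨by linarith, le_rfl⟩
  simpa [Real.cos_pi_div_two_sub] using this

open scoped ENNReal

theorem abs_cos_cosZero_sub (k : ℕ) {v : ℝ} (hv : v ∈ Set.Ioo 0 (π / 2)) :
    |Real.cos (cosZero k - v)| = Real.sin v := by
  rw [show cosZero k - v = π / 2 - v + k * π by unfold cosZero; ring, Real.cos_add_nat_mul_pi,
    Real.cos_pi_div_two_sub, abs_mul, abs_pow, abs_neg, abs_one, one_pow, one_mul,
    abs_of_pos (Real.sin_pos_of_mem_Ioo ⟨hv.1, by linarith [hv.2, Real.pi_pos]⟩)]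

theorem abs_cos_cosZero_add (k : ℕ) {v : ℝ} (hv : v ∈ Set.Ioo 0 (π / 2)) :
    |Real.cos (cosZero k + v)| = Real.sin v := by
  rw [show cosZero k + v = v + π / 2 + k * π by unfold cosZero; ring, Real.cos_add_nat_mul_pi,
    Real.cos_add_pi_div_two, abs_mul, abs_pow, abs_neg, abs_one, one_pow, one_mul, abs_neg,
    abs_of_pos (Real.sin_pos_of_mem_Ioo ⟨hv.1, by linarith [hv.2, Real.pi_pos]⟩)]

theorem mem_Ioo_of_mem_Ioo_zero {v : ℝ} (hv : v ∈ Set.Ioo 0 (π / 2)) :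
    v ∈ Set.Ioo (-(π / 2)) (π / 2) := ⟨by linarith [hv.1, hv.2], hv.2⟩

theorem lintegral_abs_cos_Ioc {p : ℝ} {F : ℝ → ℝ≥0∞} (hF : Measurable F) (k : ℕ) :
    ∫⁻ u in Set.Ioc (k * π) ((k + 1 : ℕ) * π), F |Real.cos u| * ENNReal.ofReal (u ^ (-p - 1)) =
      ∫⁻ v in Set.Ioo 0 (π / 2), F (Real.sin v) * ENNReal.ofReal (zeroWeight p k v) := by
  have hpi := Real.pi_pos
  have hc1 : cosZero k - π / 2 = k * π := by unfold cosZero; ring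
  have hc2 : cosZero k + π / 2 = (k + 1 : ℕ) * π := by unfold cosZero; push_cast; ring
  have i1 : (fun v => cosZero k - v) '' Set.Ioo 0 (π / 2) = Set.Ioo (k * π) (cosZero k) := by
    rw [Set.image_const_sub_Ioo, hc1, sub_zero]
  have i2 : (fun v => cosZero k + v) '' Set.Ioo 0 (π / 2) =
      Set.Ioo (cosZero k) ((k + 1 : ℕ) * π) := by
    rw [Set.image_const_add_Ioo, hc2, add_zero]
  rw [← Set.Ioc_union_Ioc_eq_Ioc (b := cosZero k) (by linarith) (by linarith),
    lintegral_union measurableSet_Ioc (Set.Ioc_disjoint_Ioc_of_le le_rfl),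
    ← setLIntegral_congr Ioo_ae_eq_Ioc, ← setLIntegral_congr Ioo_ae_eq_Ioc, ← i1, ← i2,
    lintegral_image_eq_lintegral_abs_deriv_mul (f := fun v => cosZero k - v)
      (f' := fun _ => -1) measurableSet_Ioo
          (fun v _ => ((hasDerivAt_id v).const_sub (cosZero k)).hasDerivWithinAt)
      (fun a _ b _ h => by simpa using h),
    lintegral_image_eq_lintegral_abs_deriv_mul (f := fun v => cosZero k + v)
      (f' := fun _ => 1) measurableSet_Ioo
          (fun v _ => ((hasDerivAt_id v).const_add (cosZero k)).hasDerivWithinAt)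
      (fun a _ b _ h => by simpa using h),
    ← lintegral_add_left (by fun_prop)]
  refine setLIntegral_congr_fun measurableSet_Ioo fun v hv => ?_
  simp only [abs_neg, abs_one, ENNReal.ofReal_one, one_mul]
  rw [abs_cos_cosZero_sub k hv, abs_cos_cosZero_add k hv, ← mul_add,
    ← ENNReal.ofReal_add (Real.rpow_nonneg (cosZero_sub_pos k hv.2).le _)
      (Real.rpow_nonneg (cosZero_add_pos k (mem_Ioo_of_mem_Ioo_zero hv).1).le _), zeroWeight]

theorem lintegral_abs_cos {p : ℝ} (hp : 0 < p) {F : ℝ → ℝ≥0∞} (hF : Measurable F) :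
    ∫⁻ u in Set.Ioi 0, F |Real.cos u| * ENNReal.ofReal (u ^ (-p - 1)) =
      ∫⁻ v in Set.Ioo 0 (π / 2), F (Real.sin v) * ENNReal.ofReal (foldedWeight p v) := by
  have hpi := Real.pi_pos
  have hmono : Monotone fun k : ℕ => (k : ℝ) * π := fun a b h => by
    have : (a : ℝ) ≤ b := by exact_mod_cast h
    exact mul_le_mul_of_nonneg_right this hpi.le
  have hU : ⋃ k : ℕ, Set.Ioc ((k : ℝ) * π) ((k + 1 : ℕ) * π) = Set.Ioi 0 := by
    have h := iUnion_Ioc_map_succ_eq_Ioi (f := fun k : ℕ => (k : ℝ) * π)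
      (fun a => hmono bot_le)
      (not_bddAbove_of_tendsto_atTop
        ((tendsto_natCast_atTop_atTop (R := ℝ)).atTop_mul_const hpi))
    simpa using h
  rw [← hU, lintegral_iUnion (fun _ => measurableSet_Ioc) (by
    simpa using hmono.pairwise_disjoint_on_Ioc_succ)]
  simp_rw [lintegral_abs_cos_Ioc hF]
  rw [← lintegral_tsum fun k => by unfold zeroWeight; fun_prop]
  refine setLIntegral_congr_fun measurableSet_Ioo fun v hv => ?_
  have hmem := mem_Ioo_of_mem_Ioo_zero hv
  rw [ENNReal.tsum_mul_left, foldedWeight, ENNReal.ofReal_tsum_of_nonneg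
    (fun k => zeroWeight_nonneg p k hmem) (summable_zeroWeight hp hmem)]

/-- The change of variables which transports `foldedWeight p v` to `u ^ (-p - 1)`. -/
noncomputable def foldedPoint (p v : ℝ) : ℝ := foldedDiff p v ^ (-(1 / p))

theorem foldedPoint_pos {p v : ℝ} (hp : 0 < p) (hv : v ∈ Set.Ioo 0 (π / 2)) :
    0 < foldedPoint p v := Real.rpow_pos_of_pos (foldedDiff_pos hp hv) _

theorem foldedPoint_sq {p v : ℝ} (hp : 0 < p) (hv : v ∈ Set.Ioo 0 (π / 2)) :
    foldedPoint p v ^ 2 = foldedDiff p v ^ (-(2 / p)) := by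
  rw [foldedPoint, ← Real.rpow_natCast, ← Real.rpow_mul (foldedDiff_pos hp hv).le]
  congr 1
  push_cast
  ring

theorem hasDerivAt_foldedPoint {p v : ℝ} (hp : 0 < p) (hv : v ∈ Set.Ioo 0 (π / 2)) :
    HasDerivAt (foldedPoint p) (-(foldedDiff p v ^ (-(1 / p) - 1) * foldedWeight p v)) v := by
  refine ((hasDerivAt_foldedDiff hp (mem_Ioo_of_mem_Ioo_zero hv)).rpow_const (p := -(1 / p))
    (Or.inl (foldedDiff_pos hp hv).ne')).congr_deriv ?_
  field_simp

theorem foldedPoint_injOn {p : ℝ} (hp : 0 < p) : Set.InjOn (foldedPoint p) (Set.Ioo 0 (π / 2)) := by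
  intro a ha b hb h
  have h' := (Real.rpow_left_inj (foldedDiff_pos hp ha).le (foldedDiff_pos hp hb).le
    (neg_ne_zero.2 (one_div_ne_zero hp.ne'))).1 h
  exact (foldedDiff_strictMonoOn hp).injOn (mem_Ioo_of_mem_Ioo_zero ha)
    (mem_Ioo_of_mem_Ioo_zero hb) h'

theorem foldedPoint_image {p : ℝ} (hp : 0 < p) :
    foldedPoint p '' Set.Ioo 0 (π / 2) = Set.Ioi 0 := by
  ext u
  constructor
  · rintro ⟨v, hv, rfl⟩
    exact foldedPoint_pos hp hv
  · intro hu
    obtain ⟨v, hv, h⟩ := exists_foldedDiff_eq hp (Real.rpow_pos_of_pos (show 0 < u from hu) (-p))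
    refine ⟨v, hv, ?_⟩
    rw [foldedPoint, h, ← Real.rpow_mul (le_of_lt hu)]
    rw [show -p * -(1 / p) = 1 by field_simp, Real.rpow_one]

theorem lintegral_foldedPoint {p : ℝ} (hp : 0 < p) (F : ℝ → ℝ≥0∞) :
    ∫⁻ u in Set.Ioi 0, F u * ENNReal.ofReal (u ^ (-p - 1)) =
      ∫⁻ v in Set.Ioo 0 (π / 2), F (foldedPoint p v) * ENNReal.ofReal (foldedWeight p v) := by
  rw [← foldedPoint_image hp, lintegral_image_eq_lintegral_abs_deriv_mul measurableSet_Ioo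
    (fun v hv => (hasDerivAt_foldedPoint hp hv).hasDerivWithinAt) (foldedPoint_injOn hp)]
  refine setLIntegral_congr_fun measurableSet_Ioo fun v hv => ?_
  have hg := foldedDiff_pos hp hv
  have hW := foldedWeight_pos hp (mem_Ioo_of_mem_Ioo_zero hv)
  rw [abs_neg, abs_of_pos (by positivity), mul_left_comm, ← ENNReal.ofReal_mul (by positivity)]
  congr 2
  rw [foldedPoint, ← Real.rpow_mul hg.le, mul_right_comm, ← Real.rpow_add hg]
  rw [show -(1 / p) - 1 + -(1 / p) * (-p - 1) = 0 by field_simp; ring, Real.rpow_zero, one_mul]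

theorem rpow_sub_mul_le {a c Y Z : ℝ} (ha : 1 ≤ a) (hc : 0 ≤ c) (hY : 0 ≤ Y) (hZ : 0 < Z)
    (h : Y ≤ Z ∧ Z ≤ c ∨ c ≤ Z ∧ Z ≤ Y) :
    Z ^ a - a * c ^ (a - 1) * Z ≤ Y ^ a - a * c ^ (a - 1) * Y := by
  have h1 := one_add_mul_self_le_rpow_one_add (s := Y / Z - 1)
    (by have : 0 ≤ Y / Z := by positivity
        linarith) ha
  rw [add_sub_cancel, Real.div_rpow hY hZ.le, le_div_iff₀ (by positivity)] at h1
  have e : (1 + a * (Y / Z - 1)) * Z ^ a = Z ^ a + a * Z ^ (a - 1) * (Y - Z) := by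
    rw [Real.rpow_sub_one hZ.ne']
    field_simp
  rw [e] at h1
  have h2 : 0 ≤ (Z ^ (a - 1) - c ^ (a - 1)) * (Y - Z) := by
    rcases h with ⟨h, h'⟩ | ⟨h, h'⟩
    · exact mul_nonneg_of_nonpos_of_nonpos
        (sub_nonpos.2 (Real.rpow_le_rpow hZ.le h' (by linarith))) (by linarith)
    · exact mul_nonneg
        (sub_nonneg.2 (Real.rpow_le_rpow hc h (by linarith))) (by linarith)
  have := mul_le_mul_of_nonneg_left h2 (show 0 ≤ a by linarith)
  linarith

theorem exists_pointwise_comparison {p s : ℝ} (hp : 9 / 5 ≤ p) (hp2 : p < 2) (hs : 2 ≤ s) :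
    ∃ c : ℝ, 0 ≤ c ∧ ∀ v ∈ Set.Ioo 0 (π / 2),
      1 - Real.exp (-(s * foldedPoint p v ^ 2 / 2)) + c * (1 - Real.sin v ^ (2 : ℝ)) ≤
      1 - Real.sin v ^ s + c * (1 - Real.exp (-(2 * foldedPoint p v ^ 2 / 2))) := by
  have hpi := Real.pi_pos
  have hp0 : 0 < p := by linarith
  set A : Set ℝ := Real.sin '' {v | v ∈ Set.Ioo 0 (π / 2) ∧
    -2 * Real.log (Real.sin v) ≤ foldedDiff p v ^ (-(2 / p))} with hA
  have hbdd : BddAbove A := ⟨1, by rintro _ ⟨v, -, rfl⟩; exact Real.sin_le_one v⟩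
  have hnn : 0 ≤ sSup A := Real.sSup_nonneg (by
    rintro _ ⟨v, hv, rfl⟩
    exact (Real.sin_pos_of_mem_Ioo ⟨hv.1.1, by linarith [hv.1.2]⟩).le)
  refine ⟨s / 2 * (sSup A ^ 2) ^ (s / 2 - 1), by positivity, fun v hv => ?_⟩
  have hsin : 0 < Real.sin v := Real.sin_pos_of_mem_Ioo ⟨hv.1, by linarith [hv.2]⟩
  have e1 : Real.sin v ^ s = (Real.sin v ^ 2) ^ (s / 2) := by
    rw [← Real.rpow_natCast, ← Real.rpow_mul hsin.le]; congr 1; push_cast; ring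
  have e2 : Real.exp (-(s * foldedPoint p v ^ 2 / 2)) =
      Real.exp (-(2 * foldedPoint p v ^ 2 / 2)) ^ (s / 2) := by
    rw [← Real.exp_mul]; congr 1; ring
  have hiff : Real.exp (-(2 * foldedPoint p v ^ 2 / 2)) ≤ Real.sin v ^ 2 ↔
      -2 * Real.log (Real.sin v) ≤ foldedDiff p v ^ (-(2 / p)) := by
    rw [← Real.le_log_iff_exp_le (by positivity), Real.log_pow, foldedPoint_sq hp0 hv]
    push_cast
    constructor <;> intro h <;> linarith
  have key := rpow_sub_mul_le (a := s / 2) (c := sSup A ^ 2)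
    (Y := Real.exp (-(2 * foldedPoint p v ^ 2 / 2))) (Z := Real.sin v ^ 2) (by linarith)
    (by positivity) (by positivity) (by positivity) (by
      rcases le_or_gt (Real.exp (-(2 * foldedPoint p v ^ 2 / 2))) (Real.sin v ^ 2) with h | h
      · exact Or.inl ⟨h, pow_le_pow_left₀ hsin.le
          (le_csSup hbdd ⟨v, ⟨hv, hiff.1 h⟩, rfl⟩) 2⟩
      · refine Or.inr ⟨pow_le_pow_left₀ hnn (Real.sSup_le ?_ hsin.le) 2, h.le⟩
        rintro _ ⟨w, ⟨hw, hw'⟩, rfl⟩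
        by_contra! hlt
        have hvw : v ≤ w := by
          by_contra! hwv
          exact hlt.not_ge (Real.sin_le_sin_of_le_of_le_pi_div_two (by linarith [hw.1]) hv.2.le
            hwv.le)
        exact h.not_ge (hiff.2 (neg_two_mul_log_sin_le_of_le hp hp2 hw.2 hv.1 hvw hw')))
  rw [e1, e2, Real.rpow_two]
  linarith

theorem aemeasurable_foldedWeight {p : ℝ} (hp : 0 < p) :
    AEMeasurable (foldedWeight p) (volume.restrict (Set.Ioo 0 (π / 2))) := by
  refine ((measurable_deriv (foldedDiff p)).div_const p).aemeasurable.congr ?_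
  filter_upwards [ae_restrict_mem measurableSet_Ioo] with v hv
  rw [(hasDerivAt_foldedDiff hp (mem_Ioo_of_mem_Ioo_zero hv)).deriv]
  field_simp

theorem ofReal_absCosIntegral {p s : ℝ} (hp0 : 0 < p) (hp2 : p < 2) (hs : 2 ≤ s) :
    ENNReal.ofReal (absCosIntegral p s) = ∫⁻ v in Set.Ioo 0 (π / 2),
      ENNReal.ofReal ((1 - Real.sin v ^ s) * foldedWeight p v) := by
  have hi := integrableOn_one_sub_abs_cos_rpow hp0 hp2 hs 1
  simp only [one_mul] at hi
  rw [absCosIntegral, ofReal_integral_eq_lintegral_ofReal hi]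
  · rw [setLIntegral_congr_fun measurableSet_Ioi fun u hu =>
      ENNReal.ofReal_mul (one_sub_abs_cos_rpow_nonneg (by linarith) u),
      lintegral_abs_cos hp0 (F := fun y => ENNReal.ofReal (1 - y ^ s)) (by fun_prop)]
    refine setLIntegral_congr_fun measurableSet_Ioo fun v hv => ?_
    rw [ENNReal.ofReal_mul]
    rw [← abs_cos_cosZero_sub 0 hv]
    exact one_sub_abs_cos_rpow_nonneg (by linarith) _
  · filter_upwards [ae_restrict_mem measurableSet_Ioi] with u hu
    exact mul_nonneg (one_sub_abs_cos_rpow_nonneg (by linarith) u)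
      (Real.rpow_nonneg (le_of_lt hu) _)

theorem one_sub_exp_nonneg {s u : ℝ} (hs : 0 ≤ s) : 0 ≤ 1 - Real.exp (-(s * u ^ 2 / 2)) := by
  rw [sub_nonneg, Real.exp_le_one_iff, neg_nonpos]
  positivity

theorem ofReal_gaussIntegral {p s : ℝ} (hp0 : 0 < p) (hp2 : p < 2) (hs : 0 ≤ s) :
    ENNReal.ofReal (gaussIntegral p s) = ∫⁻ v in Set.Ioo 0 (π / 2),
      ENNReal.ofReal ((1 - Real.exp (-(s * foldedPoint p v ^ 2 / 2))) * foldedWeight p v) := by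
  rw [gaussIntegral, ofReal_integral_eq_lintegral_ofReal (integrableOn_one_sub_exp hp0 hp2 hs)]
  · rw [setLIntegral_congr_fun measurableSet_Ioi fun u hu =>
      ENNReal.ofReal_mul (one_sub_exp_nonneg hs), lintegral_foldedPoint hp0
      (fun u => ENNReal.ofReal (1 - Real.exp (-(s * u ^ 2 / 2))))]
    refine setLIntegral_congr_fun measurableSet_Ioo fun v hv => ?_
    rw [ENNReal.ofReal_mul (one_sub_exp_nonneg hs)]
  · filter_upwards [ae_restrict_mem measurableSet_Ioi] with u hu
    exact mul_nonneg (one_sub_exp_nonneg hs) (Real.rpow_nonneg (le_of_lt hu) _)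

theorem absCosIntegral_nonneg {p s : ℝ} (hs : 0 ≤ s) : 0 ≤ absCosIntegral p s :=
  setIntegral_nonneg measurableSet_Ioi fun u hu =>
    mul_nonneg (one_sub_abs_cos_rpow_nonneg hs u) (Real.rpow_nonneg (le_of_lt hu) _)

theorem gaussIntegral_nonneg {p s : ℝ} (hs : 0 ≤ s) : 0 ≤ gaussIntegral p s :=
  setIntegral_nonneg measurableSet_Ioi fun _ hu =>
    mul_nonneg (one_sub_exp_nonneg hs) (Real.rpow_nonneg (le_of_lt hu) _)

/-- If Haagerup's integral inequality holds for `s = 2` then it holds for all `s ≥ 2`. -/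
theorem gaussIntegral_le_absCosIntegral {p s : ℝ} (hp : 9 / 5 ≤ p) (hp2 : p < 2) (hs : 2 ≤ s)
    (h2 : gaussIntegral p 2 ≤ absCosIntegral p 2) : gaussIntegral p s ≤ absCosIntegral p s := by
  have hpi := Real.pi_pos
  have hp0 : 0 < p := by linarith
  obtain ⟨c, hc, hle⟩ := exists_pointwise_comparison hp hp2 hs
  have hWm := aemeasurable_foldedWeight hp0
  have key : gaussIntegral p s + c * absCosIntegral p 2 ≤
      absCosIntegral p s + c * gaussIntegral p 2 := by
    have g1 := gaussIntegral_nonneg (p := p) (s := s) (by linarith)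
    have g2 := gaussIntegral_nonneg (p := p) (s := 2) (by norm_num)
    have a1 := absCosIntegral_nonneg (p := p) (s := s) (by linarith)
    have a2 := absCosIntegral_nonneg (p := p) (s := 2) (by norm_num)
    rw [← ENNReal.ofReal_le_ofReal_iff (by positivity), ENNReal.ofReal_add g1 (by positivity),
      ENNReal.ofReal_add a1 (by positivity), ENNReal.ofReal_mul hc, ENNReal.ofReal_mul hc,
      ofReal_absCosIntegral hp0 hp2 hs, ofReal_absCosIntegral hp0 hp2 le_rfl,
      ofReal_gaussIntegral hp0 hp2 (by linarith), ofReal_gaussIntegral hp0 hp2 (by norm_num),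
      ← lintegral_const_mul' _ _ ENNReal.ofReal_ne_top,
      ← lintegral_const_mul' _ _ ENNReal.ofReal_ne_top]
    refine (le_lintegral_add _ _).trans ?_
    rw [← lintegral_add_left' (by fun_prop)]
    refine setLIntegral_mono_ae' measurableSet_Ioo (ae_of_all _ fun v hv => ?_)
    have hW := foldedWeight_pos hp0 (mem_Ioo_of_mem_Ioo_zero hv)
    have hsin : ∀ r : ℝ, 0 ≤ r → 0 ≤ 1 - Real.sin v ^ r := fun r hr => by
      rw [← abs_cos_cosZero_sub 0 hv]
      exact one_sub_abs_cos_rpow_nonneg hr _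
    have n1 := hsin s (by linarith)
    have n2 := hsin 2 (by norm_num)
    have n3 : 0 ≤ 1 - Real.exp (-(s * foldedPoint p v ^ 2 / 2)) :=
      one_sub_exp_nonneg (by linarith)
    have n4 : 0 ≤ 1 - Real.exp (-(2 * foldedPoint p v ^ 2 / 2)) :=
      one_sub_exp_nonneg (by norm_num)
    rw [← ENNReal.ofReal_mul hc, ← ENNReal.ofReal_mul hc,
      ← ENNReal.ofReal_add (by positivity) (by positivity),
      ← ENNReal.ofReal_add (by positivity) (by positivity)]
    refine ENNReal.ofReal_le_ofReal ?_
    have := mul_le_mul_of_nonneg_right (hle v hv) hW.le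
    linarith
  have := mul_le_mul_of_nonneg_left h2 hc
  linarith

theorem absCosIntegral_two {p : ℝ} (hp0 : 0 < p) (hp2 : p < 2) :
    absCosIntegral p 2 = cosIntegral p * 2 ^ (p - 1) := by
  have h := cosIntegral_mul_signAvg hp0 hp2 [1, 1]
  have e : signAvg [1, 1] (fun y => |y| ^ p) 0 = 2 ^ (p - 1) := by
    simp only [signAvg]
    norm_num
    rw [Real.zero_rpow hp0.ne', Real.rpow_sub_one (by norm_num)]
    ring
  rw [e] at h
  rw [h, absCosIntegral]
  refine setIntegral_congr_fun measurableSet_Ioi fun t _ => ?_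
  simp [← sq]

theorem gaussIntegral_one {p : ℝ} (hp0 : 0 < p) (hp2 : p < 2) :
    gaussIntegral p 1 = cosIntegral p * (2 ^ (p / 2) * Real.Gamma ((p + 1) / 2) / √π) := by
  rw [← integral_one_sub_exp hp0 hp2, gaussIntegral]
  simp only [one_mul]

/-- Haagerup's form of Khintchine's inequality, in the Gaussian regime. -/
theorem gaussian_khintchine {p : ℝ} (hp : 9 / 5 ≤ p) (hp2 : p < 2)
    (hG : Real.Gamma ((p + 1) / 2) ≤ √π / 2) (l : List ℝ) :
    2 ^ (p / 2) * Real.Gamma ((p + 1) / 2) / √π * sqSum l ^ (p / 2) ≤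
      signAvg l (fun y => |y| ^ p) 0 := by
  have hp0 : 0 < p := by linarith
  have hκ := cosIntegral_pos hp0 hp2
  have hpi : 0 < √π := Real.sqrt_pos.2 Real.pi_pos
  have hΓ : 0 < Real.Gamma ((p + 1) / 2) := Real.Gamma_pos_of_pos (by linarith)
  set C := 2 ^ (p / 2) * Real.Gamma ((p + 1) / 2) / √π with hC
  have hC0 : 0 ≤ C := by positivity
  have hC1 : C ≤ 2 ^ (p / 2 - 1) := by
    rw [hC, Real.rpow_sub_one (by norm_num), div_le_div_iff₀ hpi (by norm_num)]
    have : (0 : ℝ) < 2 ^ (p / 2) := by positivity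
    nlinarith
  have hflat : ∀ l : List ℝ, (∀ b ∈ l, 2 * b ^ 2 ≤ sqSum l) →
      C * sqSum l ^ (p / 2) ≤ signAvg l (fun y => |y| ^ (2 * (p / 2))) 0 := by
    intro l hl
    have h2 : gaussIntegral p 2 ≤ absCosIntegral p 2 := by
      rw [gaussIntegral_eq (by norm_num), gaussIntegral_one hp0 hp2, ← hC,
        absCosIntegral_two hp0 hp2, mul_left_comm]
      refine mul_le_mul_of_nonneg_left ?_ hκ.le
      calc (2 : ℝ) ^ (p / 2) * C ≤ 2 ^ (p / 2) * 2 ^ (p / 2 - 1) := by gcongr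
        _ = 2 ^ (p - 1) := by rw [← Real.rpow_add (by norm_num)]; congr 1; ring
    have h := flat_khintchine hp0 hp2
      (fun s hs => gaussIntegral_le_absCosIntegral hp hp2 hs h2) l hl
    rw [gaussIntegral_one hp0 hp2, ← hC, mul_assoc] at h
    rw [mul_div_cancel₀ p two_ne_zero]
    exact le_of_mul_le_mul_left h hκ
  have key := dominant_khintchine (q := p / 2) (by linarith) (by linarith) hC0 hC1 hflat
  rw [mul_div_cancel₀ p two_ne_zero] at key
  cases l with
  | nil => simp [sqSum, signAvg_nil, Real.zero_rpow, hp0.ne']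
  | cons a l => rw [sqSum_cons]; exact (key l.length a l rfl).2

/-- Khintchine's inequality with the constant `2 ^ (1 / r - 1 / 2)` follows, for smaller exponents,
from the same inequality at one exponent. -/
theorem khintchine_of_khintchine {p r : ℝ} (hr : 0 < r) (hrp : r ≤ p) (hp : p < 2) (l : List ℝ)
    (h : 2 ^ (p / 2 - 1) * sqSum l ^ (p / 2) ≤ signAvg l (fun y => |y| ^ p) 0) :
    2 ^ (r / 2 - 1) * sqSum l ^ (r / 2) ≤ signAvg l (fun y => |y| ^ r) 0 := by
  rcases (sqSum_nonneg l).eq_or_lt with h0 | h0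
  · rw [← h0, Real.zero_rpow (by linarith), mul_zero]
    refine (signAvg_const l 0 0).ge.trans (signAvg_mono l (fun y => ?_) 0)
    positivity
  set S := sqSum l with hS
  obtain ⟨N, hN⟩ : ∃ N, N = 2 * S := ⟨_, rfl⟩
  have hN0 : 0 < N := by rw [hN]; positivity
  have hpow : ∀ s : ℝ, 2 ^ (s / 2 - 1) * S ^ (s / 2) = N ^ (s / 2) / 2 := fun s => by
    rw [hN, Real.mul_rpow (by norm_num) h0.le, Real.rpow_sub_one (by norm_num)]; ring
  rw [hpow] at h ⊢
  set α := (2 - p) / (2 - r) with hα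
  have hα0 : 0 < α := div_pos (by linarith) (by linarith)
  have hα1 : α ≤ 1 := by rw [hα, div_le_one (by linarith)]; linarith
  have hcomb : p = α * r + (1 - α) * 2 := by
    have : 2 - r ≠ 0 := by linarith
    rw [hα]; field_simp; ring
  have hpt : ∀ y : ℝ, |y| ^ p ≤ α * N ^ ((p - r) / 2) * |y| ^ r +
      (1 - α) * N ^ (p / 2 - 1) * y ^ 2 := by
    intro y
    have hy := abs_nonneg y
    have hg := Real.geom_mean_le_arith_mean2_weighted hα0.le (sub_nonneg.2 hα1)
      (mul_nonneg (Real.rpow_nonneg hN0.le ((p - r) / 2)) (Real.rpow_nonneg hy r))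
      (mul_nonneg (Real.rpow_nonneg hN0.le (p / 2 - 1)) (sq_nonneg y)) (by ring)
    refine le_trans (le_of_eq ?_) (hg.trans (le_of_eq (by ring)))
    rw [← sq_abs y, Real.mul_rpow (by positivity) (by positivity),
      Real.mul_rpow (by positivity) (by positivity), ← Real.rpow_natCast |y| 2,
      ← Real.rpow_mul hN0.le, ← Real.rpow_mul hN0.le, ← Real.rpow_mul hy, ← Real.rpow_mul hy,
      mul_mul_mul_comm, ← Real.rpow_add hN0]
    rw [show (p - r) / 2 * α + (p / 2 - 1) * (1 - α) = 0 by
        have : (2 - r) ≠ 0 := by linarith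
        rw [hα]; field_simp; ring, Real.rpow_zero, one_mul]
    rcases hy.eq_or_lt with h | h
    · rw [← h, Real.zero_rpow (by linarith), Real.zero_rpow (by positivity), zero_mul]
    · rw [← Real.rpow_add h]; congr 1; push_cast; linarith
  have h1 := signAvg_mono l hpt 0
  rw [signAvg_add, signAvg_const_mul, signAvg_const_mul, signAvg_sq] at h1
  have hS' : (0 : ℝ) ^ 2 + (l.map (· ^ 2)).sum = N / 2 := by rw [hN, hS, sqSum]; ring
  rw [hS'] at h1
  have e1 : N ^ (p / 2 - 1) * N = N ^ (p / 2) := by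
    rw [Real.rpow_sub_one hN0.ne']; field_simp
  have e2 : N ^ (p / 2) = N ^ ((p - r) / 2) * N ^ (r / 2) := by
    rw [← Real.rpow_add hN0]; congr 1; ring
  have h2 : α * (N ^ ((p - r) / 2) * (N ^ (r / 2) / 2)) ≤
      α * (N ^ ((p - r) / 2) * signAvg l (fun y => |y| ^ r) 0) := by
    have e3 : (1 - α) * N ^ (p / 2 - 1) * (N / 2) = (1 - α) * N ^ (p / 2) / 2 := by
      rw [← e1]; ring
    rw [e3] at h1
    have e4 : α * (N ^ ((p - r) / 2) * (N ^ (r / 2) / 2)) = α * N ^ (p / 2) / 2 := by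
      rw [e2]; ring
    rw [e4]
    linarith
  exact le_of_mul_le_mul_left (le_of_mul_le_mul_left h2 hα0) (Real.rpow_pos_of_pos hN0 _)

theorem khintchineA_nonneg (r : ℝ) (hr : 0 < r) : 0 ≤ khintchineA r := by
  unfold khintchineA
  have := (Real.Gamma_pos_of_pos (show 0 < (r + 1) / 2 by linarith)).le
  split_ifs <;> positivity

/-- The optimal Khintchine inequality for exponents in `(0, 2]`. -/
theorem khintchine {r : ℝ} (hr0 : 0 < r) (hr2 : r ≤ 2) (l : List ℝ) :
    sqSum l ^ (r / 2) ≤ khintchineA r ^ r * signAvg l (fun y => |y| ^ r) 0 := by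
  obtain ⟨h95, hlt, hΓ⟩ := khintchineP0_spec
  have hpi : 0 < √π := Real.sqrt_pos.2 Real.pi_pos
  unfold khintchineA
  split_ifs with h1 h2
  · have h := gaussian_khintchine h95 hlt hΓ.le l
    rw [hΓ, show (2 : ℝ) ^ (khintchineP0 / 2) * (√π / 2) / √π = 2 ^ (khintchineP0 / 2 - 1) by
      rw [Real.rpow_sub_one (by norm_num)]; field_simp] at h
    have := khintchine_of_khintchine hr0 h1 hlt l h
    rw [← Real.rpow_mul (by norm_num), show (1 / r - 1 / 2) * r = -(r / 2 - 1) by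
      field_simp; ring, Real.rpow_neg (by norm_num), ← div_eq_inv_mul,
      le_div_iff₀ (by positivity), mul_comm]
    exact this
  · have hle : khintchineP0 ≤ r := (not_le.1 h1).le
    have h := gaussian_khintchine (h95.trans hle) h2 (Gamma_le_of_khintchineP0_le hle hr2) l
    have hG : 0 < Real.Gamma ((r + 1) / 2) := Real.Gamma_pos_of_pos (by linarith)
    have e : (1 / √2 * (Real.Gamma ((r + 1) / 2) / √π) ^ (-(1 / r))) ^ r =
        (2 ^ (r / 2) * Real.Gamma ((r + 1) / 2) / √π)⁻¹ := by
      rw [Real.mul_rpow (by positivity) (by positivity), ← Real.rpow_mul (by positivity),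
        show -(1 / r) * r = -1 by field_simp, Real.rpow_neg_one, one_div,
        Real.inv_rpow (by positivity), Real.sqrt_eq_rpow, ← Real.rpow_mul (by norm_num),
        ← mul_inv, mul_div_assoc]
      congr 3; ring
    rw [e, ← div_eq_inv_mul, le_div_iff₀ (by positivity), mul_comm]
    exact h
  · obtain rfl : r = 2 := le_antisymm hr2 (not_lt.1 h2)
    have : signAvg l (fun y => |y| ^ (2 : ℝ)) 0 = sqSum l := by
      simp only [Real.rpow_two, sq_abs]
      rw [signAvg_sq, sqSum]; ring
    rw [this]; simp

theorem linearMap_eq_sum_single {n : ℕ} {V : Type*} [AddCommGroup V] [Module ℝ V]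
    (φ : (Fin n → ℝ) →ₗ[ℝ] V) (x : Fin n → ℝ) : φ x = ∑ j, x j • φ (Pi.single j 1) := by
  conv_lhs => rw [← Finset.univ_sum_single x, map_sum]
  refine Finset.sum_congr rfl fun j _ => ?_
  rw [← map_smul, ← Pi.single_smul', smul_eq_mul, mul_one]

/-- `signAvg` is an average over finitely many choices of signs. -/
theorem exists_signs (n : ℕ) : ∃ (Ω : Type) (_ : Fintype Ω) (w : Ω → ℝ) (ε : Ω → Fin n → ℝ),
    (∀ ω, 0 ≤ w ω) ∧ ∑ ω, w ω = 1 ∧ (∀ ω i, |ε ω i| ≤ 1) ∧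
    ∀ (c : Fin n → ℝ) (f : ℝ → ℝ) (x : ℝ),
      signAvg (List.ofFn c) f x = ∑ ω, w ω * f (x + ∑ i, c i * ε ω i) := by
  induction n with
  | zero =>
    refine ⟨Unit, inferInstance, fun _ => 1, fun _ => 0, by simp, by simp, by simp, ?_⟩
    intro c f x
    simp [signAvg_nil]
  | succ n ih =>
    obtain ⟨Ω, _, w, ε, hw, hw1, hε, h⟩ := ih
    refine ⟨Bool × Ω, inferInstance, fun ω => w ω.2 / 2,
      fun ω => Fin.cons (if ω.1 then 1 else -1) (ε ω.2), fun ω => by have := hw ω.2; positivity,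
      ?_, ?_, ?_⟩
    · simp only [Fintype.sum_prod_type, Fintype.sum_bool, ← Finset.sum_div, hw1]
      norm_num
    · rintro ⟨b, ω⟩ i
      refine Fin.cases ?_ (fun i => ?_) i
      · cases b <;> simp
      · simpa using hε ω i
    · intro c f x
      rw [List.ofFn_succ, signAvg_cons, h, h]
      simp only [Fintype.sum_prod_type, Fintype.sum_bool, Fin.sum_univ_succ, Fin.cons_zero,
        Fin.cons_succ]
      rw [add_div, Finset.sum_div, Finset.sum_div]
      congr 1
      all_goals
        refine Finset.sum_congr rfl fun ω _ => ?_
        simp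
        ring_nf

/-- Minkowski's inequality for finitely many summands. -/
theorem Lp_sum_le_of_nonneg {ι κ : Type*} [Fintype ι] (t : Finset κ) {f : κ → ι → ℝ} {s : ℝ}
    (hs : 1 ≤ s) (hf : ∀ k i, 0 ≤ f k i) :
    (∑ i, (∑ k ∈ t, f k i) ^ s) ^ (1 / s) ≤ ∑ k ∈ t, (∑ i, f k i ^ s) ^ (1 / s) := by
  classical
  induction t using Finset.induction_on with
  | empty =>
    simp [Real.zero_rpow (show s ≠ 0 by linarith), Real.zero_rpow (show s⁻¹ ≠ 0 by positivity)]
  | insert k t hk ih =>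
    simp_rw [Finset.sum_insert hk]
    exact (Real.Lp_add_le_of_nonneg Finset.univ hs (fun i _ => hf k i)
      fun i _ => Finset.sum_nonneg fun _ _ => hf _ _).trans (by gcongr)

theorem sum_sq_eq_sum_sqSum {m n : ℕ} (B : MultilinearMap ℝ (fun _ : Fin (m + 1) => Fin n → ℝ) ℝ) :
    ∑ i : Fin (m + 1) → Fin n, B (fun k => Pi.single (i k) 1) ^ 2 =
      ∑ i : Fin m → Fin n, sqSum (List.ofFn fun j =>
        B.curryLeft (Pi.single j 1) (fun k => Pi.single (i k) 1)) := by
  rw [← (Fin.consEquiv fun _ => Fin n).sum_comp, Fintype.sum_prod_type, Finset.sum_comm]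
  refine Finset.sum_congr rfl fun i _ => ?_
  rw [sqSum, List.map_ofFn, List.sum_ofFn]
  refine Finset.sum_congr rfl fun j _ => ?_
  simp only [Function.comp, MultilinearMap.curryLeft_apply]
  congr 2
  ext k : 1
  refine Fin.cases ?_ (fun k => ?_) k <;> simp [Fin.consEquiv]

/-- The iterated Khintchine inequality for a finite family of multilinear forms. -/
theorem sum_rpow_sum_sq_le {r : ℝ} (hr0 : 0 < r) (hr2 : r ≤ 2) {n N : ℕ} {M : ℝ} (m : ℕ)
    (B : Fin N → MultilinearMap ℝ (fun _ : Fin m => Fin n → ℝ) ℝ)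
    (hB : ∀ y : Fin m → Fin n → ℝ, (∀ k j, |y k j| ≤ 1) → ∑ a, |B a y| ^ r ≤ M) :
    ∑ a, (∑ i : Fin m → Fin n, B a (fun k => Pi.single (i k) 1) ^ 2) ^ (r / 2) ≤
      (khintchineA r ^ r) ^ m * M := by
  have hA : 0 ≤ khintchineA r ^ r := Real.rpow_nonneg (khintchineA_nonneg r hr0) r
  induction m with
  | zero =>
    rw [pow_zero, one_mul]
    refine le_trans (le_of_eq ?_) (hB (fun k => k.elim0) fun k => k.elim0)
    refine Finset.sum_congr rfl fun a _ => ?_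
    rw [Fintype.sum_unique, ← abs_rpow_eq_sq_rpow, mul_div_cancel₀ r two_ne_zero]
    congr 3
    ext k
    exact k.elim0
  | succ m ih =>
    obtain ⟨Ω, _, w, ε, hw, hw1, hε, hsign⟩ := exists_signs n
    have hs : 1 ≤ 2 / r := by rw [le_div_iff₀ hr0]; linarith
    have hs' : 1 / (2 / r) = r / 2 := one_div_div 2 r
    have hstep : ∀ a, (∑ i : Fin (m + 1) → Fin n, B a (fun k => Pi.single (i k) 1) ^ 2) ^ (r / 2) ≤
        khintchineA r ^ r * ∑ ω, w ω * (∑ i : Fin m → Fin n,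
          (B a).curryLeft (ε ω) (fun k => Pi.single (i k) 1) ^ 2) ^ (r / 2) := by
      intro a
      rw [sum_sq_eq_sum_sqSum]
      have h1 : ∀ i : Fin m → Fin n, sqSum (List.ofFn fun j =>
          (B a).curryLeft (Pi.single j 1) (fun k => Pi.single (i k) 1)) ≤
          (∑ ω, khintchineA r ^ r * (w ω *
            |(B a).curryLeft (ε ω) (fun k => Pi.single (i k) 1)| ^ r)) ^ (2 / r) := by
        intro i
        have h := khintchine hr0 hr2 (List.ofFn fun j =>
          (B a).curryLeft (Pi.single j 1) (fun k => Pi.single (i k) 1))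
        rw [hsign, Finset.mul_sum] at h
        have e : ∀ ω, 0 + ∑ j, (B a).curryLeft (Pi.single j 1) (fun k => Pi.single (i k) 1) *
            ε ω j = (B a).curryLeft (ε ω) (fun k => Pi.single (i k) 1) := fun ω => by
          rw [linearMap_eq_sum_single (B a).curryLeft (ε ω), _root_.sum_apply, zero_add]
          simp [mul_comm]
        simp only [e] at h
        have h2 := Real.rpow_le_rpow (Real.rpow_nonneg (sqSum_nonneg _) _) h
          (show 0 ≤ 2 / r by positivity)
        rwa [← Real.rpow_mul (sqSum_nonneg _), div_mul_div_cancel₀ two_ne_zero, div_self hr0.ne',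
          Real.rpow_one] at h2
      have h3 := Lp_sum_le_of_nonneg (ι := Fin m → Fin n) (Finset.univ : Finset Ω) (f := fun ω i =>
        khintchineA r ^ r * (w ω * |(B a).curryLeft (ε ω) (fun k => Pi.single (i k) 1)| ^ r)) hs
        (fun ω i => by have := hw ω; positivity)
      rw [hs'] at h3
      refine (Real.rpow_le_rpow (Finset.sum_nonneg fun _ _ => sqSum_nonneg _)
        (Finset.sum_le_sum fun i _ => h1 i) (by positivity)).trans (h3.trans (le_of_eq ?_))
      rw [Finset.mul_sum]
      refine Finset.sum_congr rfl fun ω _ => ?_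
      have e : ∀ i : Fin m → Fin n, (khintchineA r ^ r * (w ω *
          |(B a).curryLeft (ε ω) (fun k => Pi.single (i k) 1)| ^ r)) ^ (2 / r) =
          (khintchineA r ^ r * w ω) ^ (2 / r) *
            (B a).curryLeft (ε ω) (fun k => Pi.single (i k) 1) ^ 2 := fun i => by
        have := hw ω
        rw [← mul_assoc, Real.mul_rpow (by positivity) (by positivity),
          ← Real.rpow_mul (abs_nonneg _), mul_div_cancel₀ 2 hr0.ne', Real.rpow_two, sq_abs]
      simp only [e]
      have hw' := hw ω
      rw [← Finset.mul_sum, Real.mul_rpow (by positivity) (by positivity),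
        ← Real.rpow_mul (by positivity), div_mul_div_cancel₀' two_ne_zero, div_self hr0.ne',
        Real.rpow_one, mul_assoc]
    calc _ ≤ ∑ a, khintchineA r ^ r * ∑ ω, w ω * (∑ i : Fin m → Fin n,
          (B a).curryLeft (ε ω) (fun k => Pi.single (i k) 1) ^ 2) ^ (r / 2) :=
          Finset.sum_le_sum fun a _ => hstep a
      _ = khintchineA r ^ r * ∑ ω, w ω * ∑ a, (∑ i : Fin m → Fin n,
          (B a).curryLeft (ε ω) (fun k => Pi.single (i k) 1) ^ 2) ^ (r / 2) := by
          simp only [← Finset.mul_sum]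
          rw [Finset.sum_comm]
          simp only [Finset.mul_sum]
      _ ≤ khintchineA r ^ r * ∑ ω, w ω * ((khintchineA r ^ r) ^ m * M) := by
          refine mul_le_mul_of_nonneg_left (Finset.sum_le_sum fun ω _ =>
            mul_le_mul_of_nonneg_left (ih (fun a => (B a).curryLeft (ε ω)) fun y hy => ?_)
              (hw ω)) hA
          refine hB (Fin.cons (ε ω) y) fun k j => ?_
          refine Fin.cases ?_ (fun k => ?_) k
          · exact hε ω j
          · exact hy k j
      _ = _ := by rw [← Finset.sum_mul, hw1]; ring

theorem exists_abs_multilinearMap_le {m n : ℕ}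
    (B : MultilinearMap ℝ (fun _ : Fin m => Fin n → ℝ) ℝ) :
    ∃ C, ∀ y : Fin m → Fin n → ℝ, (∀ k j, |y k j| ≤ 1) → |B y| ≤ C := by
  induction m with
  | zero => exact ⟨|B 0|, fun y _ => by rw [Subsingleton.elim y 0]⟩
  | succ m ih =>
    choose C hC using fun j => ih (B.curryLeft (Pi.single j 1))
    refine ⟨∑ j, C j, fun y hy => ?_⟩
    have e : B y = ∑ j, y 0 j * B.curryLeft (Pi.single j 1) (Fin.tail y) := by
      conv_lhs => rw [← Fin.cons_self_tail y, ← MultilinearMap.curryLeft_apply,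
        linearMap_eq_sum_single B.curryLeft, _root_.sum_apply]
      simp
    rw [e]
    refine (Finset.abs_sum_le_sum_abs _ _).trans (Finset.sum_le_sum fun j _ => ?_)
    rw [abs_mul]
    exact (mul_le_of_le_one_left (abs_nonneg _) (hy 0 j)).trans (hC j _ fun k j => hy k.succ j)

theorem abs_le_one_of_lpNorm_le_one {p : ℝ} (hp : 0 < p) {n : ℕ} {x : Fin n → ℝ}
    (hx : lpNorm p x ≤ 1) (i : Fin n) : |x i| ≤ 1 := by
  have hnn : 0 ≤ ∑ i, |x i| ^ p := by positivity
  have h1 : ∑ i, |x i| ^ p ≤ 1 := by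
    by_contra! h
    exact hx.not_gt (Real.one_lt_rpow h (by positivity))
  have h2 : |x i| ^ p ≤ 1 :=
    (Finset.single_le_sum (f := fun i => |x i| ^ p) (fun i _ => by positivity)
      (Finset.mem_univ i)).trans h1
  by_contra! h
  exact h2.not_gt (Real.one_lt_rpow h hp)

theorem abs_le_one_of_linfNorm_le_one {n : ℕ} {x : Fin n → ℝ} (hx : linfNorm x ≤ 1) (i : Fin n) :
    |x i| ≤ 1 := (le_ciSup (f := fun i => |x i|) (Set.finite_range _).bddAbove i).trans hx

theorem abs_le_multiOpNorm {p : ℝ} (hp : 0 < p) {N n m : ℕ}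
    (T : (Fin N → ℝ) →ₗ[ℝ] MultilinearMap ℝ (fun _ : Fin m => (Fin n → ℝ)) ℝ)
    {x : Fin N → ℝ} {y : Fin m → Fin n → ℝ} (hx : lpNorm p x ≤ 1) (hy : ∀ k j, |y k j| ≤ 1) :
    |T x y| ≤ multiOpNorm p T := by
  refine le_csSup ?_ ⟨x, y, hx, fun k => Real.iSup_le (hy k) zero_le_one, rfl⟩
  choose C hC using fun a => exists_abs_multilinearMap_le (T (Pi.single a 1))
  refine ⟨∑ a, C a, ?_⟩
  rintro _ ⟨x, y, hx, hy, rfl⟩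
  rw [linearMap_eq_sum_single T x, _root_.sum_apply]
  refine (Finset.abs_sum_le_sum_abs _ _).trans (Finset.sum_le_sum fun a _ => ?_)
  rw [_root_.smul_apply, smul_eq_mul, abs_mul]
  exact (mul_le_of_le_one_left (abs_nonneg _) (abs_le_one_of_lpNorm_le_one hp hx a)).trans
    (hC a y fun k j => abs_le_one_of_linfNorm_le_one (hy k) j)

theorem multiOpNorm_nonneg (p : ℝ) {N n m : ℕ}
    (T : (Fin N → ℝ) →ₗ[ℝ] MultilinearMap ℝ (fun _ : Fin m => (Fin n → ℝ)) ℝ) :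
    0 ≤ multiOpNorm p T :=
  Real.sSup_nonneg (by rintro _ ⟨x, y, -, -, rfl⟩; exact abs_nonneg _)

theorem sum_abs_rpow_le_multiOpNorm_rpow {p r : ℝ} (hpr : r.HolderConjugate p) {N n m : ℕ}
    (T : (Fin N → ℝ) →ₗ[ℝ] MultilinearMap ℝ (fun _ : Fin m => (Fin n → ℝ)) ℝ)
    {y : Fin m → Fin n → ℝ} (hy : ∀ k j, |y k j| ≤ 1) :
    ∑ a, |T (Pi.single a 1) y| ^ r ≤ multiOpNorm p T ^ r := by
  have hr := hpr.pos
  have hp := hpr.symm.pos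
  obtain ⟨⟨g, hg, hgeq⟩, -⟩ := NNReal.isGreatest_Lp Finset.univ
    (fun a => ‖T (Pi.single a 1) y‖₊) hpr
  have hg' : ∑ a, (g a : ℝ) ^ p ≤ 1 := by exact_mod_cast hg
  have hgeq' : ∑ a, |T (Pi.single a 1) y| * (g a : ℝ) =
      (∑ a, |T (Pi.single a 1) y| ^ r) ^ (1 / r) := by
    have := congrArg ((↑) : NNReal → ℝ) hgeq
    push_cast at this
    simpa only [Real.norm_eq_abs] using this
  set x : Fin N → ℝ := fun a => SignType.sign (T (Pi.single a 1) y) * g a with hx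
  have hxle : ∀ a, |x a| ≤ g a := fun a => by
    rw [hx]
    simp only
    rw [abs_mul, NNReal.abs_eq]
    refine mul_le_of_le_one_left (g a).2 ?_
    rcases lt_trichotomy (T (Pi.single a 1) y) 0 with h | h | h <;> simp [h]
  have hx1 : lpNorm p x ≤ 1 := by
    refine Real.rpow_le_one (by positivity) (le_trans ?_ hg') (by positivity)
    gcongr with a
    exact hxle a
  have h := abs_le_multiOpNorm hp T hx1 hy
  have e : T x y = ∑ a, |T (Pi.single a 1) y| * (g a : ℝ) := by
    rw [linearMap_eq_sum_single T x, _root_.sum_apply]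
    refine Finset.sum_congr rfl fun a _ => ?_
    rw [_root_.smul_apply, smul_eq_mul, hx, mul_right_comm, sign_mul_self]
  rw [e, hgeq'] at h
  have hroot := Real.rpow_le_rpow (by positivity) ((le_abs_self _).trans h) hr.le
  rwa [← Real.rpow_mul (by positivity), one_div_mul_cancel hr.ne', Real.rpow_one] at hroot

/-- Multilinear mixed `(ℓ₂, ℓ_{p/(p-1)})`-Littlewood inequality with constant
`(A_{p/(p-1)})^{M-1}`, for an `M`-linear form with `M = m + 1 ≥ 3`. -/
theorem multilinear_mixed_littlewood_swapped (m : ℕ) (hm : 2 ≤ m) (p : ℝ) (hp : 2 ≤ p) (n : ℕ)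
    (T : (Fin n → ℝ) →ₗ[ℝ] MultilinearMap ℝ (fun _ : Fin m => (Fin n → ℝ)) ℝ) :
    (∑ i : Fin m → Fin n, (∑ i₁ : Fin n,
        |T (Pi.single i₁ 1) (fun k => Pi.single (i k) 1)| ^ (p / (p - 1)))
          ^ (2 * (p - 1) / p)) ^ ((1 : ℝ) / 2)
      ≤ khintchineA (p / (p - 1)) ^ m * multiOpNorm p T := by
  set r := p / (p - 1) with hr
  have hp1 : 0 < p - 1 := by linarith
  have hr0 : 0 < r := div_pos (by linarith) hp1
  have hr2 : r ≤ 2 := by rw [hr, div_le_iff₀ hp1]; linarith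
  have hpr : r.HolderConjugate p := (Real.HolderConjugate.conjExponent (by linarith)).symm
  have hexp : 2 * (p - 1) / p = 2 / r := by rw [hr]; field_simp
  have hA := khintchineA_nonneg r hr0
  have hτ := multiOpNorm_nonneg p T
  rw [hexp]
  have h1 := Lp_sum_le_of_nonneg (ι := Fin m → Fin n) (Finset.univ : Finset (Fin n))
    (f := fun a i => |T (Pi.single a 1) (fun k => Pi.single (i k) 1)| ^ r) (s := 2 / r)
    (by rw [le_div_iff₀ hr0]; linarith) (fun _ _ => by positivity)
  have h2 := sum_rpow_sum_sq_le hr0 hr2 m (fun a => T (Pi.single a 1))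
    (fun y hy => sum_abs_rpow_le_multiOpNorm_rpow hpr T hy)
  have e : ∀ z : ℝ, (|z| ^ r) ^ (2 / r) = z ^ 2 := fun z => by
    rw [← Real.rpow_mul (abs_nonneg _), mul_div_cancel₀ 2 hr0.ne', Real.rpow_two, sq_abs]
  simp only [e, one_div_div] at h1
  have h3 := Real.rpow_le_rpow (by positivity) (h1.trans h2) (show 0 ≤ 1 / r by positivity)
  rw [← Real.rpow_mul (by positivity), show r / 2 * (1 / r) = 1 / 2 by field_simp] at h3
  refine h3.trans (le_of_eq ?_)
  rw [Real.mul_rpow (by positivity) (by positivity), ← Real.rpow_natCast,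
    ← Real.rpow_mul (by positivity), ← Real.rpow_mul hA, ← Real.rpow_mul hτ,
    mul_one_div_cancel hr0.ne', Real.rpow_one, show r * (m * (1 / r)) = m by field_simp,
    Real.rpow_natCast]
end

section
/- Let M ≥ 3 be an integer and p ∈ [2, ∞) a real number, and let C ≥ 0 be a constant such that for every n ∈ ℕ and every M-linear form T : ℝⁿ × ℝⁿ × ⋯ × ℝⁿ → ℝ one has (∑_{i₁=1}^{n} (∑_{i₂,…,i_M=1}^{n} |T(e_{i₁},…,e_{i_M})|²)^{(1/2)·(p/(p−1))})^{(p−1)/p} ≤ C · ‖T‖, where ‖T‖ := sup{|T(x^{(1)},…,x^{(M)})| : ‖x^{(1)}‖_{ℓ_p} ≤ 1 and ‖x^{(k)}‖_{ℓ_∞} ≤ 1 for k = 2,…,M}. Then C ≥ (A_{p/(p−1)})^{M−1}; that is, the optimal constant in the multilinear mixed (ℓ_{p/(p−1)}, ℓ₂)-Littlewood inequality is exactly (A_{p/(p−1)})^{M−1}. -/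
open MeasureTheory Real Filter

open ProbabilityTheory Topology

/-- The sign `±1` encoded by a Boolean. -/
noncomputable def boolSign (b : Bool) : ℝ := if b then 1 else -1

/-- The sum of the `q`-th absolute powers of all sign sums `±1 ± ⋯ ± 1` with `d` terms. -/
noncomputable def signPowerSum (d : ℕ) (q : ℝ) : ℝ :=
  ∑ ε : Fin d → Bool, |∑ j, boolSign (ε j)| ^ q

lemma boolSign_sq (b : Bool) : boolSign b ^ 2 = 1 := by
  cases b <;> simp [boolSign]

lemma signPowerSum_nonneg (d : ℕ) (q : ℝ) : 0 ≤ signPowerSum d q :=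
  Finset.sum_nonneg fun _ _ => by positivity

lemma sum_sq_sum_boolSign (d : ℕ) :
    ∑ ε : Fin d → Bool, (∑ j, boolSign (ε j)) ^ 2 = 2 ^ d * d := by
  induction d with
  | zero => simp
  | succ d ih =>
    rw [← (Fin.consEquiv fun _ : Fin (d + 1) => Bool).sum_comp, Fintype.sum_prod_type,
      Fintype.sum_bool, ← Finset.sum_add_distrib]
    have key (ε : Fin d → Bool) :
        (∑ j, boolSign (Fin.consEquiv (fun _ : Fin (d + 1) => Bool) (true, ε) j)) ^ 2 +
          (∑ j, boolSign (Fin.consEquiv (fun _ : Fin (d + 1) => Bool) (false, ε) j)) ^ 2 =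
        2 + 2 * (∑ j, boolSign (ε j)) ^ 2 := by
      simp only [Fin.consEquiv_apply, Fin.sum_univ_succ, Fin.cons_zero, Fin.cons_succ]
      simp only [boolSign, if_true, Bool.false_eq_true, if_false]
      ring
    simp only [key, Finset.sum_add_distrib, ← Finset.mul_sum, ih]
    simp
    ring

/-- Replacing the coefficients `1` in a sign sum by signs permutes the sign patterns. -/
lemma sum_abs_sum_boolSign_mul_sign (d : ℕ) (q : ℝ) (y : Fin d → ℝ)
    (hy : ∀ j, y j ∈ ({-1, 1} : Set ℝ)) :
    ∑ ε : Fin d → Bool, |∑ j, boolSign (ε j) * y j| ^ q = signPowerSum d q := by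
  classical
  let σ : (Fin d → Bool) ≃ (Fin d → Bool) :=
    Equiv.piCongrRight fun j => if y j = 1 then Equiv.refl _ else Equiv.boolNot
  rw [signPowerSum, ← σ.sum_comp]
  refine Finset.sum_congr rfl fun ε _ => ?_
  congr 2
  refine Finset.sum_congr rfl fun j _ => ?_
  rcases hy j with h | h
  · have h' : y j ≠ 1 := by rw [h]; norm_num
    cases hε : ε j <;> simp [σ, boolSign, h', hε, Pi.map] <;> simp_all
  · rw [Set.mem_singleton_iff] at h
    simp [σ, boolSign, h]

lemma convexOn_sum_abs_sum_boolSign_mul (d : ℕ) {q : ℝ} (hq : 1 ≤ q) :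
    ConvexOn ℝ Set.univ
      fun y : Fin d → ℝ => ∑ ε : Fin d → Bool, |∑ j, boolSign (ε j) * y j| ^ q := by
  have key (ε : Fin d → Bool) :
      ConvexOn ℝ Set.univ fun y : Fin d → ℝ => |∑ j, boolSign (ε j) * y j| ^ q := by
    refine ⟨convex_univ, fun x _ y _ a b ha hb hab => ?_⟩
    have h1 : |∑ j, boolSign (ε j) * (a • x + b • y) j| ≤
        a * |∑ j, boolSign (ε j) * x j| + b * |∑ j, boolSign (ε j) * y j| := by
      have : ∑ j, boolSign (ε j) * (a • x + b • y) j =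
          a * ∑ j, boolSign (ε j) * x j + b * ∑ j, boolSign (ε j) * y j := by
        simp only [Finset.mul_sum, ← Finset.sum_add_distrib]
        refine Finset.sum_congr rfl fun j _ => ?_
        simp
        ring
      rw [this]
      refine (abs_add_le _ _).trans ?_
      rw [abs_mul, abs_mul, abs_of_nonneg ha, abs_of_nonneg hb]
    refine (Real.rpow_le_rpow (abs_nonneg _) h1 (by linarith)).trans ?_
    exact (convexOn_rpow hq).2 (Set.mem_Ici.2 (abs_nonneg _)) (Set.mem_Ici.2 (abs_nonneg _))
      ha hb hab
  refine ⟨convex_univ, fun x hx y hy a b ha hb hab => ?_⟩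
  simp only [Finset.smul_sum, ← Finset.sum_add_distrib]
  exact Finset.sum_le_sum fun ε _ => (key ε).2 hx hy ha hb hab

lemma sum_abs_sum_boolSign_mul_le (d : ℕ) {q : ℝ} (hq : 1 ≤ q) (y : Fin d → ℝ)
    (hy : ∀ j, |y j| ≤ 1) :
    ∑ ε : Fin d → Bool, |∑ j, boolSign (ε j) * y j| ^ q ≤ signPowerSum d q := by
  have hmem : y ∈ convexHull ℝ (Set.univ.pi fun _ : Fin d => ({-1, 1} : Set ℝ)) := by
    rw [convexHull_pi]
    intro j _
    rw [convexHull_pair, segment_eq_Icc (by norm_num)]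
    exact abs_le.1 (hy j)
  obtain ⟨z, hz, hyz⟩ := (convexOn_sum_abs_sum_boolSign_mul d hq).exists_ge_of_mem_convexHull
    (Set.subset_univ _) hmem
  exact hyz.trans_eq (sum_abs_sum_boolSign_mul_sign d q z fun j => hz j trivial)

lemma abs_le_linfNorm {n : ℕ} (y : Fin n → ℝ) (j : Fin n) : |y j| ≤ linfNorm y :=
  le_ciSup (f := fun i => |y i|) (Set.finite_range _).bddAbove j

/-- The linear form `y ↦ ∑ j, ±y (f j)` with signs prescribed by `ε`. -/
noncomputable def signForm {d n : ℕ} (f : Fin d → Fin n) (ε : Fin d → Bool) :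
    (Fin n → ℝ) →ₗ[ℝ] ℝ :=
  ∑ j, boolSign (ε j) • LinearMap.proj (f j)

lemma signForm_apply {d n : ℕ} (f : Fin d → Fin n) (ε : Fin d → Bool) (y : Fin n → ℝ) :
    signForm f ε y = ∑ j, boolSign (ε j) * y (f j) := by
  simp [signForm]

lemma sum_sq_signForm_single {d n : ℕ} {f : Fin d → Fin n} (hf : Function.Injective f)
    (ε : Fin d → Bool) : ∑ l, signForm f ε (Pi.single l 1) ^ 2 = d := by
  classical
  have key (l : Fin n) :
      signForm f ε (Pi.single l 1) ^ 2 = ∑ j, if f j = l then (1 : ℝ) else 0 := by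
    rw [signForm_apply]
    by_cases h : ∃ j, f j = l
    · obtain ⟨j, rfl⟩ := h
      simp [Pi.single_apply, hf.eq_iff, boolSign_sq]
    · push Not at h
      simp [h]
  simp only [key]
  rw [Finset.sum_comm]
  simp

/-- The form `(x, y₁, …, y_m) ↦ ∑ i, x i * ∏ k, ⟨signs (i, k), y k⟩`. -/
noncomputable def signProductForm {d n m : ℕ} (f : Fin d → Fin n)
    (e : Fin n → Fin m → Fin d → Bool) :
    (Fin n → ℝ) →ₗ[ℝ] MultilinearMap ℝ (fun _ : Fin m => (Fin n → ℝ)) ℝ :=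
  ∑ i, (LinearMap.proj i : (Fin n → ℝ) →ₗ[ℝ] ℝ).smulRight
    ((MultilinearMap.mkPiAlgebra ℝ (Fin m) ℝ).compLinearMap fun k => signForm f (e i k))

lemma signProductForm_apply {d n m : ℕ} (f : Fin d → Fin n)
    (e : Fin n → Fin m → Fin d → Bool) (x : Fin n → ℝ) (y : Fin m → Fin n → ℝ) :
    signProductForm f e x y = ∑ i, x i * ∏ k, signForm f (e i k) (y k) := by
  simp [signProductForm]

lemma signProductForm_single {d n m : ℕ} (f : Fin d → Fin n)
    (e : Fin n → Fin m → Fin d → Bool) (i : Fin n) (y : Fin m → Fin n → ℝ) :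
    signProductForm f e (Pi.single i 1) y = ∏ k, signForm f (e i k) (y k) := by
  classical
  simp [signProductForm_apply, Pi.single_apply]

lemma sum_sq_signProductForm_single {d n m : ℕ} {f : Fin d → Fin n}
    (hf : Function.Injective f) (e : Fin n → Fin m → Fin d → Bool) (i : Fin n) :
    ∑ l : Fin m → Fin n,
      |signProductForm f e (Pi.single i 1) fun k => Pi.single (l k) 1| ^ (2 : ℝ) =
        (d : ℝ) ^ m := by
  classical
  simp only [signProductForm_single, Real.rpow_two, sq_abs, ← Finset.prod_pow]
  have h := Finset.prod_univ_sum (fun _ : Fin m => (Finset.univ : Finset (Fin n)))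
    (fun k l => signForm f (e i k) (Pi.single l 1) ^ 2)
  rw [Fintype.piFinset_univ] at h
  rw [← h]
  simp [sum_sq_signForm_single hf]

lemma multiOpNorm_signProductForm_le {d n m : ℕ} (f : Fin d → Fin n)
    (e : Fin n ≃ (Fin m → Fin d → Bool)) {p q : ℝ} (hpq : p.HolderConjugate q) :
    multiOpNorm p (signProductForm f e) ≤ (signPowerSum d q ^ m) ^ (1 / q) := by
  classical
  refine Real.sSup_le ?_ (Real.rpow_nonneg (pow_nonneg (signPowerSum_nonneg d q) m) _)
  rintro c ⟨x, y, hx, hy, rfl⟩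
  rw [signProductForm_apply]
  have hsum : ∑ i, |∏ k, signForm f (e i k) (y k)| ^ q ≤ signPowerSum d q ^ m := by
    rw [e.sum_comp fun ε => |∏ k, signForm f (ε k) (y k)| ^ q]
    have h := Finset.prod_univ_sum (fun _ : Fin m => (Finset.univ : Finset (Fin d → Bool)))
      (fun k ε => |signForm f ε (y k)| ^ q)
    rw [Fintype.piFinset_univ] at h
    simp only [Finset.abs_prod]
    simp_rw [← Real.finsetProd_rpow _ _ (fun k _ => abs_nonneg _)]
    rw [← h]
    have hconst : ∏ _k : Fin m, signPowerSum d q = signPowerSum d q ^ m := by simp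
    rw [← hconst]
    refine Finset.prod_le_prod (fun k _ => Finset.sum_nonneg fun _ _ => by positivity)
      fun k _ => ?_
    simp only [signForm_apply]
    exact sum_abs_sum_boolSign_mul_le d hpq.symm.lt.le (fun j => y k (f j))
      fun j => (abs_le_linfNorm _ _).trans (hy k)
  calc |∑ i, x i * ∏ k, signForm f (e i k) (y k)|
      ≤ ∑ i, |x i| * |∏ k, signForm f (e i k) (y k)| := by
        simpa only [abs_mul] using Finset.abs_sum_le_sum_abs
          (fun i => x i * ∏ k, signForm f (e i k) (y k)) Finset.univ
    _ ≤ _root_.lpNorm p x * (∑ i, |∏ k, signForm f (e i k) (y k)| ^ q) ^ (1 / q) := by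
        simpa only [abs_abs, _root_.lpNorm] using Real.inner_le_Lp_mul_Lq Finset.univ
          (fun i => |x i|) (fun i => |∏ k, signForm f (e i k) (y k)|) hpq
    _ ≤ 1 * (signPowerSum d q ^ m) ^ (1 / q) := by
        have := hpq.symm.pos
        gcongr
    _ = _ := one_mul _

/-- Testing a mixed Littlewood inequality on sign product forms: the constant is at least the
`m`-th power of the Khintchine quotient of the vector `(1, …, 1)` of length `d`. -/
lemma pow_sqrt_le_of_mixed_littlewood {m : ℕ} (hm : m ≠ 0) {p q : ℝ}
    (hpq : p.HolderConjugate q) {C : ℝ} (hC : 0 ≤ C)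
    (h : ∀ (n : ℕ)
        (T : (Fin n → ℝ) →ₗ[ℝ] MultilinearMap ℝ (fun _ : Fin m => (Fin n → ℝ)) ℝ),
      (∑ i₁ : Fin n, (∑ i : Fin m → Fin n,
          |T (Pi.single i₁ 1) (fun k => Pi.single (i k) 1)| ^ (2 : ℝ)) ^ ((1 / 2) * q)) ^ (1 / q)
        ≤ C * multiOpNorm p T) (d : ℕ) :
    √d ^ m ≤ C * ((signPowerSum d q / 2 ^ d) ^ (1 / q)) ^ m := by
  have hq := hpq.symm.pos
  have hS := signPowerSum_nonneg d q
  set n := Fintype.card (Fin m → Fin d → Bool) with hn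
  have hcard : n = (2 ^ d) ^ m := by simp [hn]
  have hdn : d ≤ n := by
    rw [hcard]
    exact Nat.lt_two_pow_self.le.trans (Nat.le_self_pow hm _)
  obtain ⟨f, hf⟩ : ∃ f : Fin d → Fin n, Function.Injective f :=
    ⟨_, Fin.castLE_injective hdn⟩
  let e : Fin n ≃ (Fin m → Fin d → Bool) := (Fintype.equivFin _).symm
  have key := (h n (signProductForm f e)).trans
    (mul_le_mul_of_nonneg_left (multiOpNorm_signProductForm_le f e hpq) hC)
  simp only [sum_sq_signProductForm_single hf] at key
  have hd : (0 : ℝ) ≤ d := d.cast_nonneg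
  have hL : (∑ _i : Fin n, ((d : ℝ) ^ m) ^ (1 / 2 * q)) ^ (1 / q) =
      (((2 : ℝ) ^ d) ^ (1 / q)) ^ m * √d ^ m := by
    rw [Finset.sum_const, Finset.card_univ, Fintype.card_fin, nsmul_eq_mul, hcard,
      Real.mul_rpow (by positivity) (by positivity), ← Real.rpow_mul (by positivity)]
    push_cast
    have : 1 / 2 * q * (1 / q) = 1 / 2 := by field_simp
    rw [this, ← Real.sqrt_eq_rpow, Real.rpow_pow_comm (by positivity)]
    congr 1
    rw [Real.sqrt_eq_rpow, Real.sqrt_eq_rpow, Real.rpow_pow_comm hd]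
  rw [hL, ← Real.rpow_pow_comm hS] at key
  rw [Real.div_rpow hS (by positivity), div_pow, ← mul_div_assoc, le_div_iff₀ (by positivity)]
  linarith

/-- The law of `(±1 ± ⋯ ± 1) / √d` for `d` independent uniform signs. -/
noncomputable def signSumLaw (d : ℕ) : Measure ℝ :=
  (PMF.uniformOfFintype (Fin d → Bool)).toMeasure.map
    fun ε => (√d)⁻¹ * ∑ j, boolSign (ε j)

instance (d : ℕ) : IsProbabilityMeasure (signSumLaw d) :=
  Measure.isProbabilityMeasure_map (measurable_of_finite _).aemeasurable

lemma integral_signSumLaw {E : Type*} [NormedAddCommGroup E] [NormedSpace ℝ E]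
    [CompleteSpace E] (d : ℕ) {g : ℝ → E} (hg : Continuous g) :
    ∫ x, g x ∂signSumLaw d =
      ((2 : ℝ) ^ d)⁻¹ • ∑ ε : Fin d → Bool, g ((√d)⁻¹ * ∑ j, boolSign (ε j)) := by
  rw [signSumLaw, integral_map (measurable_of_finite _).aemeasurable hg.aestronglyMeasurable,
    PMF.integral_eq_sum, Finset.smul_sum]
  simp

lemma charFun_signSumLaw (d : ℕ) (t : ℝ) :
    charFun (signSumLaw d) t =
      charFun ((PMF.uniformOfFintype Bool).toMeasure.map boolSign) ((√d)⁻¹ * t) ^ d := by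
  have h := Finset.prod_univ_sum (fun _ : Fin d => (Finset.univ : Finset Bool))
    (fun _ b => Complex.exp (((√d)⁻¹ * t : ℝ) * boolSign b * Complex.I))
  rw [Fintype.piFinset_univ, Finset.prod_const, Finset.card_univ, Fintype.card_fin] at h
  rw [charFun_apply_real, charFun_apply_real, integral_signSumLaw d (by fun_prop),
    integral_map (measurable_of_finite _).aemeasurable
      (Continuous.aestronglyMeasurable (by fun_prop)), PMF.integral_eq_sum]
  simp only [PMF.uniformOfFintype_apply, ← Finset.smul_sum, smul_pow, h, ← Complex.exp_sum]
  congr 1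
  · simp
  · refine Finset.sum_congr rfl fun ε _ => ?_
    congr 1
    push_cast
    simp only [Finset.mul_sum, Finset.sum_mul]
    exact Finset.sum_congr rfl fun j _ => by ring

lemma tendsto_integral_signSumLaw (g : BoundedContinuousFunction ℝ ℝ) :
    Tendsto (fun d => ∫ x, g x ∂signSumLaw d) atTop (𝓝 (∫ x, g x ∂gaussianReal 0 1)) := by
  let ν : ℕ → ProbabilityMeasure ℝ := fun d => ⟨signSumLaw d, inferInstance⟩
  let γ : ProbabilityMeasure ℝ := ⟨gaussianReal 0 1, inferInstance⟩
  suffices Tendsto ν atTop (𝓝 γ) from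
    ProbabilityMeasure.tendsto_iff_forall_integral_tendsto.1 this g
  refine ProbabilityMeasure.tendsto_iff_tendsto_charFun.2 fun t => ?_
  have h := tendsto_charFun_inv_sqrt_mul_pow (P := (PMF.uniformOfFintype Bool).toMeasure)
    (X := boolSign) (measurable_of_finite _).aemeasurable
    (by simp [PMF.integral_eq_sum, boolSign])
    (by simp only [Pi.pow_apply, boolSign_sq, integral_const, probReal_univ, smul_eq_mul, mul_one]) t
  change Tendsto (fun d => charFun (signSumLaw d) t) atTop (𝓝 (charFun (gaussianReal 0 1) t))
  simpa [charFun_signSumLaw, charFun_gaussianReal, neg_div] using h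

lemma integrable_abs_rpow_gaussianReal_s14 {q : ℝ} (hq : 0 < q) :
    Integrable (fun x : ℝ => |x| ^ q) (gaussianReal 0 1) := by
  have h := (memLp_id_gaussianReal (μ := 0) (v := 1) q.toNNReal).integrable_norm_rpow
    (by simpa using hq) (by simp)
  simpa [hq.le] using h

lemma integral_abs_rpow_gaussianReal_s14 {q : ℝ} (hq : 0 < q) :
    ∫ x, |x| ^ q ∂gaussianReal 0 1 = 2 ^ (q / 2) * (Real.Gamma ((q + 1) / 2) / √π) := by
  rw [integral_gaussianReal_eq_integral_smul one_ne_zero]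
  have h1 (x : ℝ) : gaussianPDFReal 0 1 x • |x| ^ q =
      (√(2 * π))⁻¹ * (fun u : ℝ => u ^ q * Real.exp (-(1 / 2) * u ^ (2 : ℝ))) |x| := by
    simp only [gaussianPDFReal, smul_eq_mul, NNReal.coe_one, mul_one, sub_zero, Real.rpow_two,
      sq_abs]
    rw [show -x ^ 2 / 2 = -(1 / 2) * x ^ 2 by ring]
    ring
  simp only [h1]
  rw [integral_const_mul, integral_comp_abs (f := fun u : ℝ =>
      u ^ q * Real.exp (-(1 / 2) * u ^ (2 : ℝ))),
    integral_rpow_mul_exp_neg_mul_rpow two_pos (by linarith) (by norm_num),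
    Real.sqrt_mul (by norm_num)]
  have h2 : (1 / 2 : ℝ) ^ (-(q + 1) / 2) = 2 ^ (q / 2) * √2 := by
    rw [one_div, Real.inv_rpow (by norm_num), ← Real.rpow_neg (by norm_num), Real.sqrt_eq_rpow,
      ← Real.rpow_add (by norm_num)]
    congr 1
    ring
  rw [h2]
  have : √π ≠ 0 := by positivity
  field_simp

lemma rpow_le_min_add {q K : ℝ} (hq : 0 < q) (hq2 : q < 2) (hK : 0 < K) (x : ℝ) :
    |x| ^ q ≤ min (|x| ^ q) (K ^ q) + K ^ (q - 2) * x ^ 2 := by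
  rcases le_total |x| K with h | h
  · rw [min_eq_left (Real.rpow_le_rpow (abs_nonneg _) h hq.le)]
    have : 0 ≤ K ^ (q - 2) * x ^ 2 := by positivity
    linarith
  · have hx : 0 < |x| := hK.trans_le h
    have h1 : |x| ^ q = |x| ^ (q - 2) * x ^ 2 := by
      rw [← sq_abs, ← Real.rpow_two, ← Real.rpow_add hx]
      congr 1
      ring
    have h2 : |x| ^ (q - 2) ≤ K ^ (q - 2) :=
      Real.rpow_le_rpow_of_nonpos hK h (by linarith)
    have h3 : 0 ≤ min (|x| ^ q) (K ^ q) := by positivity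
    rw [h1] at h3 ⊢
    nlinarith [sq_nonneg x]

lemma integral_sq_signSumLaw {d : ℕ} (hd : d ≠ 0) : ∫ x, x ^ 2 ∂signSumLaw d = 1 := by
  rw [integral_signSumLaw d (by fun_prop)]
  have : (d : ℝ) ≠ 0 := by exact_mod_cast hd
  simp only [mul_pow, ← Finset.mul_sum, sum_sq_sum_boolSign, inv_pow, smul_eq_mul,
    Real.sq_sqrt d.cast_nonneg]
  field_simp

lemma integrable_signSumLaw {d : ℕ} {g : ℝ → ℝ} (hg : Continuous g) :
    Integrable g (signSumLaw d) := by
  rw [signSumLaw, integrable_map_measure hg.aestronglyMeasurable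
    (measurable_of_finite _).aemeasurable]
  exact Integrable.of_finite

lemma exists_signSumLaw_moment_lt {q : ℝ} (hq : 0 < q) (hq2 : q < 2) {δ : ℝ}
    (hδ : ∫ x, |x| ^ q ∂gaussianReal 0 1 < δ) :
    ∃ d : ℕ, d ≠ 0 ∧ ∫ x, |x| ^ q ∂signSumLaw d < δ := by
  have hcont : Continuous fun x : ℝ => |x| ^ q :=
    continuous_abs.rpow_const fun _ => Or.inr hq.le
  have hlim : Tendsto (fun K : ℝ => ∫ x, |x| ^ q ∂gaussianReal 0 1 + K ^ (q - 2)) atTop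
      (𝓝 (∫ x, |x| ^ q ∂gaussianReal 0 1 + 0)) := by
    have := tendsto_rpow_neg_atTop (y := 2 - q) (by linarith)
    rw [neg_sub] at this
    exact this.const_add _
  rw [add_zero] at hlim
  obtain ⟨K, hK, hK0⟩ := ((hlim.eventually_lt_const hδ).and (eventually_gt_atTop 0)).exists
  let g : BoundedContinuousFunction ℝ ℝ :=
    BoundedContinuousFunction.ofNormedAddCommGroup (fun x => min (|x| ^ q) (K ^ q))
      (hcont.min continuous_const) (K ^ q) fun x => by
        rw [Real.norm_of_nonneg (by positivity)]
        exact min_le_right _ _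
  have hg : ∫ x, g x ∂gaussianReal 0 1 ≤ ∫ x, |x| ^ q ∂gaussianReal 0 1 :=
    integral_mono (g.integrable _) (integrable_abs_rpow_gaussianReal_s14 hq) fun x => min_le_left _ _
  obtain ⟨d, hd, hd0⟩ := (((tendsto_integral_signSumLaw g).eventually_lt_const
    (show _ < δ - K ^ (q - 2) by linarith)).and (eventually_ne_atTop 0)).exists
  refine ⟨d, hd0, ?_⟩
  have hle : ∫ x, |x| ^ q ∂signSumLaw d ≤ ∫ x, (g x + K ^ (q - 2) * x ^ 2) ∂signSumLaw d :=
    integral_mono (integrable_signSumLaw hcont)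
      ((g.integrable _).add (integrable_signSumLaw (by fun_prop)))
      fun x => rpow_le_min_add hq hq2 hK0 x
  rw [integral_add (g.integrable _) (integrable_signSumLaw (by fun_prop)), integral_const_mul,
    integral_sq_signSumLaw hd0] at hle
  linarith

lemma signPowerSum_eq_integral {d : ℕ} (hd : d ≠ 0) {q : ℝ} (hq : 0 < q) :
    signPowerSum d q / 2 ^ d = √d ^ q * ∫ x, |x| ^ q ∂signSumLaw d := by
  have hd' : 0 < √(d : ℝ) := Real.sqrt_pos.2 (by exact_mod_cast Nat.pos_of_ne_zero hd)
  rw [integral_signSumLaw d (continuous_abs.rpow_const fun _ => Or.inr hq.le), signPowerSum]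
  simp only [abs_mul, abs_inv, abs_of_pos hd']
  simp_rw [Real.mul_rpow (inv_nonneg.2 hd'.le) (abs_nonneg _), ← Finset.mul_sum,
    Real.inv_rpow hd'.le, smul_eq_mul]
  have : √(d : ℝ) ^ q ≠ 0 := (Real.rpow_pos_of_pos hd' q).ne'
  field_simp

/-- Optimality: any constant in the multilinear mixed `(ℓ_{p/(p-1)}, ℓ₂)`-Littlewood
inequality for `M`-linear forms (`M = m + 1 ≥ 3`) is at least `(A_{p/(p-1)})^{M-1}`. -/
theorem multilinear_mixed_littlewood_optimal (m : ℕ) (hm : 2 ≤ m) (p : ℝ) (hp : 2 ≤ p)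
    (C : ℝ) (hC : 0 ≤ C)
    (h : ∀ (n : ℕ)
        (T : (Fin n → ℝ) →ₗ[ℝ] MultilinearMap ℝ (fun _ : Fin m => (Fin n → ℝ)) ℝ),
      (∑ i₁ : Fin n, (∑ i : Fin m → Fin n,
          |T (Pi.single i₁ 1) (fun k => Pi.single (i k) 1)| ^ (2 : ℝ))
            ^ ((1 / 2) * (p / (p - 1)))) ^ ((p - 1) / p)
        ≤ C * multiOpNorm p T) :
    khintchineA (p / (p - 1)) ^ m ≤ C := by
  have hpq : p.HolderConjugate (p / (p - 1)) := .conjExponent (by linarith)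
  have hinv : (p - 1) / p = 1 / (p / (p - 1)) := by rw [one_div_div]
  rw [hinv] at h
  generalize p / (p - 1) = q at *
  have hq : 0 < q := hpq.symm.pos
  have key := pow_sqrt_le_of_mixed_littlewood (by lia) hpq hC h
  unfold khintchineA
  split_ifs with h1 h2
  · have h := key 2
    have hS : signPowerSum 2 q = 2 * 2 ^ q := by
      rw [signPowerSum, ← (Fin.consEquiv fun _ : Fin 2 => Bool).sum_comp, Fintype.sum_prod_type,
        Fintype.sum_bool, ← (Equiv.funUnique (Fin 1) Bool).symm.sum_comp,
        ← (Equiv.funUnique (Fin 1) Bool).symm.sum_comp]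
      simp [boolSign, Fin.sum_univ_succ, hq.ne']
      norm_num
      ring
    have hE : (signPowerSum 2 q / 2 ^ 2) ^ (1 / q) * 2 ^ (1 / q) = 2 := by
      rw [hS, ← Real.mul_rpow (by positivity) (by positivity),
        show (2 * 2 ^ q / 2 ^ 2 * 2 : ℝ) = 2 ^ q by ring, ← Real.rpow_mul (by norm_num),
        mul_one_div_cancel hq.ne', Real.rpow_one]
    have hA : (2 : ℝ) ^ (1 / q - 1 / 2) * √2 = 2 ^ (1 / q) := by
      rw [Real.sqrt_eq_rpow, ← Real.rpow_add (by norm_num)]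
      congr 1
      ring
    have h22 : √(2 : ℝ) * √2 = 2 := Real.mul_self_sqrt (by norm_num)
    have hE' : (signPowerSum 2 q / 2 ^ 2) ^ (1 / q) * 2 ^ (1 / q - 1 / 2) = √2 := by
      have : √(2 : ℝ) ≠ 0 := by positivity
      apply mul_right_cancel₀ this
      rw [mul_assoc, hA, hE, h22]
    have hpos : 0 < (signPowerSum 2 q / 2 ^ 2) ^ (1 / q) := by
      rw [hS]
      positivity
    push_cast at h
    rw [← hE', mul_pow, mul_comm] at h
    exact le_of_mul_le_mul_right h (pow_pos hpos m)
  · set γ := ∫ x, |x| ^ q ∂gaussianReal 0 1 with hγ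
    have hγ' := integral_abs_rpow_gaussianReal_s14 hq
    rw [← hγ] at hγ'
    have hG : 0 < Real.Gamma ((q + 1) / 2) / √π :=
      div_pos (Real.Gamma_pos_of_pos (by linarith)) (by positivity)
    have hγ0 : 0 < γ := by rw [hγ']; positivity
    have hδ (δ : ℝ) (hδ : γ < δ) : 1 ≤ C * (δ ^ (1 / q)) ^ m := by
      obtain ⟨d, hd, hlt⟩ := exists_signSumLaw_moment_lt hq h2 hδ
      have hd' : 0 < √(d : ℝ) := Real.sqrt_pos.2 (by exact_mod_cast Nat.pos_of_ne_zero hd)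
      have h0 : 0 ≤ ∫ x, |x| ^ q ∂signSumLaw d := integral_nonneg fun x => by positivity
      have h := key d
      rw [signPowerSum_eq_integral hd hq, Real.mul_rpow (by positivity) h0,
        ← Real.rpow_mul hd'.le, mul_one_div_cancel hq.ne', Real.rpow_one, mul_pow,
        mul_left_comm, le_mul_iff_one_le_right (pow_pos hd' m)] at h
      refine h.trans ?_
      gcongr
    have hlim : 1 ≤ C * (γ ^ (1 / q)) ^ m := by
      have hcont : Tendsto (fun δ : ℝ => C * (δ ^ (1 / q)) ^ m) (𝓝[>] γ)
          (𝓝 (C * (γ ^ (1 / q)) ^ m)) :=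
        (((Real.continuousAt_rpow_const γ (1 / q) (Or.inl hγ0.ne')).pow m).const_mul C).tendsto
          |>.mono_left nhdsWithin_le_nhds
      exact ge_of_tendsto hcont (eventually_mem_nhdsWithin.mono hδ)
    have hA : 1 / √2 * (Real.Gamma ((q + 1) / 2) / √π) ^ (-(1 / q)) = (γ ^ (1 / q))⁻¹ := by
      rw [hγ', Real.mul_rpow (by positivity) hG.le, ← Real.rpow_mul (by norm_num),
        Real.rpow_neg hG.le, mul_inv, Real.sqrt_eq_rpow, one_div, one_div]
      congr 3
      field_simp
    rw [hA, inv_pow, ← one_div, div_le_iff₀ (by positivity)]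
    exact hlim
  · have h := key 1
    have hS : signPowerSum 1 q = 2 := by
      rw [signPowerSum, ← (Equiv.funUnique (Fin 1) Bool).symm.sum_comp]
      simp [boolSign]
      norm_num
    simpa [hS] using h
end
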